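/- arXiv:1301.5799 — 4 statements merged into one kernel-verified Lean document; each statement's English description precedes it below -/
import Mathlib

section
/- Let K be a compact Hausdorff space belonging to the class G₀ (defined below). The following conditions are equivalent: (i) K is a Corson compact; (ii) C(L) has a 1-projectional skeleton for every continuous image L of K; (iii) (B_{C(L)*}, w*) has a retractional skeleton for every continuous image L of K; (iv) P(L) has a retractional skeleton for every continuous image L of K. -/
/-!
Call a *good pair* a set `S` of points of a compact space `X` and a set `F` of continuous functions
such that the functions in `F` identify each point of `X` with exactly one point of `closure S`.
A good pair yields a retraction of `X` onto `closure S`. If all sets of points, functions and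
auxiliary objects that are closed under some countable-valued finitary operation give good pairs,
then composing with the retractions coming from countable closed sets is a 1-projectional skeleton
of `C(X)` (`has1ProjectionalSkeleton_of_goodPair`). If moreover `X` is countably tight, then
decomposing it along transfinite chains of closed sets produces a point-countable separating family
of functions, so that `X` is Corson (`isCorsonCompact_of_goodPair`).

(i) implies (ii): for an image `φ : K → L` of a Corson compact space, the operation closes off
under supports of points, pairs in the kernel of `φ`, and Urysohn functions on `L`; countably
supported coordinates then make every closed set a good pair (`has1ProjectionalSkeleton_of_corson`).

(ii) implies (iii) and (iv): the adjoints of the projections are weak* continuous, preserve the dual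
ball and, from the index on at which constants are fixed, the probability measures
(`hasRetractionalSkeleton_of_projectional`).

(iii) or (iv) implies (i): fix an image `L` with a skeleton on the ball or on `P(L)`, and call
`x : L` good if its point evaluation lies in the set induced by the skeleton. The induced set is
countably closed and countably tight. Two sources of good points are available: Gδ points
(`DualSkeleton.mem_good_of_isGδ`), and points `c` at which two open sets with otherwise disjoint
closures meet (`DualSkeleton.mem_good_of_two_sided`), because some retraction sends the evaluation
at `c` to a probability measure carried by both closures. If all points are good, then `L` embeds
in the induced set, and this makes `L` Corson (`isCorsonCompact_of_full`).

The class `G₀` enters through the density of Gδ points. Were they not dense, some image `M` of `K`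
without isolated points would contain `[0, ω₁]`. Glue `λ` to `λ + 1` for all countable limits `λ`,
and `0` to `ω₁`. One point of each pair is isolated in `[0, ω₁]`, which is nowhere dense, so the
glued points are good by the two-sided criterion; but the image of `ω₁` is in the closure of the
others and of no countable subset of them, against countable tightness
(`exists_quotient_isEmpty_dualSkeleton`). With Gδ points dense in `K`, a non-isolated point `x` is
glued to another non-isolated point; it becomes good in the quotient, and tightness there provides
countably many Gδ points accumulating at `x`, so that `x` is good in `K`.
-/

open Filter Topology TopologicalSpace Set

universe u v

/-- A retractional skeleton in a topological space `K`: a family `r s : C(K, K)` of continuous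
retractions indexed by an up-directed (nonempty) partially ordered set `Γ` such that
(i) each `r s` has metrizable range and the net `(r s x)` converges to `x`;
(ii) `s ≤ t` implies `r s ∘ r t = r t ∘ r s = r s`;
(iii) each strictly increasing sequence has a supremum `t` and `r t x = lim_n r (f n) x`. -/
structure RetractionalSkeleton (K : Type u) [TopologicalSpace K] : Type (u + 1) where
  Γ : Type u
  [po : PartialOrder Γ]
  [ne : Nonempty Γ]
  directed : ∀ s t : Γ, ∃ w, s ≤ w ∧ t ≤ w
  r : Γ → C(K, K)
  isRetraction : ∀ s, ∀ x : K, r s (r s x) = r s x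
  metrizable : ∀ s, MetrizableSpace ↥(Set.range (r s))
  tendsto_id : ∀ x : K, Tendsto (fun s => r s x) atTop (𝓝 x)
  comp_eq_of_le : ∀ s t : Γ, s ≤ t → ∀ x : K, r s (r t x) = r s x ∧ r t (r s x) = r s x
  sup_seq : ∀ f : ℕ → Γ, StrictMono f → ∃ t : Γ, IsLUB (Set.range f) t ∧
    ∀ x : K, Tendsto (fun n => r (f n) x) atTop (𝓝 (r t x))

/-- The set `D(𝔰) = ⋃ s, r s [K]` induced by a retractional skeleton. -/
def RetractionalSkeleton.inducedSet {K : Type u} [TopologicalSpace K]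
    (𝔰 : RetractionalSkeleton K) : Set K := ⋃ s, Set.range (𝔰.r s)

/-- `D` is induced by an r-skeleton in `K`. -/
def IsInducedByRSkeleton {K : Type u} [TopologicalSpace K] (D : Set K) : Prop :=
  ∃ 𝔰 : RetractionalSkeleton K, 𝔰.inducedSet = D

/-- `K` has a retractional skeleton. -/
def HasRetractionalSkeleton (K : Type u) [TopologicalSpace K] : Prop :=
  Nonempty (RetractionalSkeleton K)

/-- `K` is a Corson compact space: it is homeomorphic to a compact subset of
`Σ(Γ) = {x ∈ ℝ^Γ : x γ ≠ 0 for at most countably many γ}` for some set `Γ`. -/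
def IsCorsonCompact (K : Type u) [TopologicalSpace K] : Prop :=
  ∃ (Γ : Type u) (A : Set (Γ → ℝ)), IsCompact A ∧
    (∀ x ∈ A, {γ | x γ ≠ 0}.Countable) ∧ Nonempty (K ≃ₜ ↥A)

/-- A projectional skeleton in a normed space `X`: a family of bounded linear projections
indexed by an up-directed (nonempty) partially ordered set `Γ` such that
(i) `X = ⋃ s, P s [X]` and each `P s [X]` is separable;
(ii) `s ≤ t` implies `P s ∘ P t = P t ∘ P s = P s`;
(iii) each strictly increasing sequence has a supremum `t` with
`P t [X] = closure (⋃ n, P (f n) [X])`. -/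
structure ProjectionalSkeleton (X : Type u) [NormedAddCommGroup X] [NormedSpace ℝ X] :
    Type (u + 1) where
  Γ : Type u
  [po : PartialOrder Γ]
  [ne : Nonempty Γ]
  directed : ∀ s t : Γ, ∃ w, s ≤ w ∧ t ≤ w
  P : Γ → X →L[ℝ] X
  idem : ∀ s, ∀ x : X, P s (P s x) = P s x
  separable : ∀ s, IsSeparable (Set.range (P s))
  covers : ∀ x : X, ∃ s, x ∈ Set.range (P s)
  comp_eq_of_le : ∀ s t : Γ, s ≤ t → ∀ x : X, P s (P t x) = P s x ∧ P t (P s x) = P s x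
  sup_seq : ∀ f : ℕ → Γ, StrictMono f → ∃ t : Γ, IsLUB (Set.range f) t ∧
    (Set.range (P t) : Set X) = closure (⋃ n, Set.range (P (f n)))

/-- `X` has a 1-projectional skeleton: a projectional skeleton with `‖P s‖ ≤ 1` for all `s`. -/
def Has1ProjectionalSkeleton (X : Type u) [NormedAddCommGroup X] [NormedSpace ℝ X] : Prop :=
  ∃ 𝔰 : ProjectionalSkeleton X, ∀ s, ‖𝔰.P s‖ ≤ 1

/-- The closed unit ball of the dual of `X`, as a subset of the weak* dual `(X*, w*)`. -/
def dualBall (X : Type u) [NormedAddCommGroup X] [NormedSpace ℝ X] : Set (WeakDual ℝ X) :=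
  {φ | ∀ x : X, |φ x| ≤ ‖x‖}

/-- The space `P(K)` of Radon probability measures on a compact space `K`, identified via the
Riesz representation theorem with the set of positive normalized functionals in the weak*
dual of `C(K, ℝ)`; the subspace topology is the w*-topology. -/
def probMeasuresSet (K : Type u) [TopologicalSpace K] [CompactSpace K] :
    Set (WeakDual ℝ C(K, ℝ)) :=
  {φ | φ 1 = 1 ∧ ∀ f : C(K, ℝ), (∀ x, 0 ≤ f x) → 0 ≤ φ f}

/-- The first uncountable ordinal `ω₁`. -/
noncomputable def omega1 : Ordinal.{0} := (Cardinal.aleph 1).ord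

/-- The ordinal segment `[0, ω₁]` with its (order-induced) topology. -/
abbrev OrdinalSegmentOmega1 : Type 1 := ↥(Set.Iic omega1)

/-- `K` belongs to the class `G₀`: for every nonempty open `U ⊆ K`, if `U` contains no
Gδ point of `K`, then the one-point compactification of `U` contains a homeomorphic copy
of the ordinal segment `[0, ω₁]`. -/
def InClassG0 (K : Type u) [TopologicalSpace K] : Prop :=
  ∀ U : Set K, IsOpen U → U.Nonempty → (∀ x ∈ U, ¬ IsGδ ({x} : Set K)) →
    ∃ f : OrdinalSegmentOmega1 → OnePoint ↥U, Topology.IsEmbedding f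

/-! ### Retractional skeletons and their induced sets -/

attribute [instance] RetractionalSkeleton.po RetractionalSkeleton.ne

namespace RetractionalSkeleton

variable {P : Type u} [TopologicalSpace P] (𝔰 : RetractionalSkeleton P)

lemma fix_of_le {s t : 𝔰.Γ} (h : s ≤ t) {x : P} (hx : 𝔰.r s x = x) : 𝔰.r t x = x := by
  have := (𝔰.comp_eq_of_le s t h x).2
  rwa [hx] at this

lemma mem_inducedSet_iff {x : P} : x ∈ 𝔰.inducedSet ↔ ∃ s, 𝔰.r s x = x := by
  simp only [inducedSet, mem_iUnion, mem_range]
  constructor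
  · rintro ⟨s, y, rfl⟩
    exact ⟨s, 𝔰.isRetraction s y⟩
  · rintro ⟨s, hs⟩
    exact ⟨s, x, hs⟩

/-- Every increasing sequence of indices, strictly increasing or not, has an upper bound `t` such
that the retractions converge pointwise to `r t` along some subsequence. -/
lemma sup_seq_mono (f : ℕ → 𝔰.Γ) (hf : Monotone f) :
    ∃ t, (∀ n, f n ≤ t) ∧ ∃ k : ℕ → ℕ, StrictMono k ∧
      ∀ x, Tendsto (fun n => 𝔰.r (f (k n)) x) atTop (𝓝 (𝔰.r t x)) := by
  by_cases h : ∃ N, ∀ n, f n ≤ f N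
  · obtain ⟨N, hN⟩ := h
    refine ⟨f N, hN, id, strictMono_id, fun x => tendsto_const_nhds.congr' ?_⟩
    filter_upwards [eventually_ge_atTop N] with n hn
    rw [le_antisymm (hf hn) (hN _), id]
  · push Not at h
    have step : ∀ N, ∃ n, N < n ∧ f N < f n := by
      intro N
      obtain ⟨n, hn⟩ := h N
      have hNn : N < n := by
        by_contra hc
        exact hn (hf (not_lt.mp hc))
      exact ⟨n, hNn, lt_of_le_of_ne (hf hNn.le) fun he => hn he.symm.le⟩
    choose g hg using step
    let k : ℕ → ℕ := fun n => Nat.rec 0 (fun _ m => g m) n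
    have hk : StrictMono k := strictMono_nat_of_lt_succ fun n => (hg (k n)).1
    have hfk : StrictMono (f ∘ k) := strictMono_nat_of_lt_succ fun n => (hg (k n)).2
    obtain ⟨t, ht, hlim⟩ := 𝔰.sup_seq (f ∘ k) hfk
    exact ⟨t, fun n => (hf (hk.id_le n)).trans (ht.1 ⟨n, rfl⟩), k, hk, hlim⟩

lemma eq_of_forall_seq [T2Space P] {f : ℕ → 𝔰.Γ} {t : 𝔰.Γ} {k : ℕ → ℕ}
    (hk : ∀ x, Tendsto (fun n => 𝔰.r (f (k n)) x) atTop (𝓝 (𝔰.r t x))) {x y : P}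
    (h : ∀ n, 𝔰.r (f n) x = 𝔰.r (f n) y) : 𝔰.r t x = 𝔰.r t y :=
  tendsto_nhds_unique (hk x) ((hk y).congr fun n => (h (k n)).symm)

/-- Countably many indices have a common upper bound. -/
lemma exists_ge_of_seq (g : ℕ → 𝔰.Γ) : ∃ t, ∀ n, g n ≤ t := by
  choose w hw using 𝔰.directed
  let f : ℕ → 𝔰.Γ := fun n => Nat.rec (g 0) (fun m s => w s (g (m + 1))) n
  have hf : Monotone f := monotone_nat_of_le_succ fun n => (hw (f n) (g (n + 1))).1
  have hg : ∀ n, g n ≤ f n := by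
    intro n
    cases n with
    | zero => exact le_rfl
    | succ n => exact (hw (f n) (g (n + 1))).2
  obtain ⟨t, ht, -⟩ := 𝔰.sup_seq_mono f hf
  exact ⟨t, fun n => (hg n).trans (ht n)⟩

lemma exists_fix_of_countable {A : Set P} (hA : A.Countable) (hAD : A ⊆ 𝔰.inducedSet)
    (s₀ : 𝔰.Γ) : ∃ t, s₀ ≤ t ∧ ∀ a ∈ A, 𝔰.r t a = a := by
  rcases A.eq_empty_or_nonempty with rfl | hne
  · exact ⟨s₀, le_rfl, by simp⟩
  obtain ⟨e, rfl⟩ := hA.exists_eq_range hne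
  have : ∀ n, ∃ s, 𝔰.r s (e n) = e n := fun n => 𝔰.mem_inducedSet_iff.1 (hAD ⟨n, rfl⟩)
  choose g hg using this
  obtain ⟨t, ht⟩ := 𝔰.exists_ge_of_seq g
  obtain ⟨w, hw₁, hw₂⟩ := 𝔰.directed s₀ t
  refine ⟨w, hw₁, ?_⟩
  rintro _ ⟨n, rfl⟩
  exact 𝔰.fix_of_le ((ht n).trans hw₂) (hg n)

lemma fix_of_mem_closure [T2Space P] {A : Set P} {t : 𝔰.Γ} (h : ∀ a ∈ A, 𝔰.r t a = a) {x : P}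
    (hx : x ∈ closure A) : 𝔰.r t x = x := by
  have hc : IsClosed {y | 𝔰.r t y = y} := isClosed_eq (𝔰.r t).continuous continuous_id
  exact closure_minimal h hc hx

/-- The induced set contains the closures of its countable subsets. -/
lemma mem_inducedSet_of_mem_closure [T2Space P] {A : Set P} (hA : A.Countable)
    (hAD : A ⊆ 𝔰.inducedSet) {x : P} (hx : x ∈ closure A) : x ∈ 𝔰.inducedSet := by
  obtain ⟨t, -, ht⟩ := 𝔰.exists_fix_of_countable hA hAD (Classical.arbitrary _)
  exact 𝔰.mem_inducedSet_iff.2 ⟨t, 𝔰.fix_of_mem_closure ht hx⟩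

/-- The induced set meets every nonempty fibre of a continuous map into a first countable
Hausdorff space, arbitrarily near a given point of the fibre. -/
lemma exists_mem_fibre [T2Space P] [CompactSpace P] {Y : Type*} [TopologicalSpace Y]
    [FirstCountableTopology Y] [T2Space Y] {f : P → Y} (hf : Continuous f) (x : P) {O : Set P}
    (hO : O ∈ 𝓝 x) : ∃ t, 𝔰.r t x ∈ O ∧ f (𝔰.r t x) = f x := by
  obtain ⟨C, hC, hCc, hCO⟩ := exists_mem_nhds_isClosed_subset hO
  obtain ⟨V, hV⟩ := (𝓝 (f x)).exists_antitone_basis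
  have hdir : IsDirectedOrder 𝔰.Γ := ⟨𝔰.directed⟩
  have ev : ∀ n, ∃ s₀, ∀ s ≥ s₀, 𝔰.r s x ∈ C ∧ f (𝔰.r s x) ∈ V n := by
    intro n
    have h1 := (𝔰.tendsto_id x).eventually hC
    have h2 := (𝔰.tendsto_id x).eventually (hf.continuousAt (hV.mem n))
    exact eventually_atTop.1 (h1.and h2)
  choose g hg using ev
  choose w hw using 𝔰.directed
  let s : ℕ → 𝔰.Γ := fun n => Nat.rec (g 0) (fun m s => w s (g (m + 1))) n
  have hs : Monotone s := monotone_nat_of_le_succ fun n => (hw (s n) (g (n + 1))).1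
  have hgs : ∀ n, g n ≤ s n := by
    intro n
    cases n with
    | zero => exact le_rfl
    | succ n => exact (hw (s n) (g (n + 1))).2
  obtain ⟨t, -, k, hk, hlim⟩ := 𝔰.sup_seq_mono s hs
  refine ⟨t, hCO (hCc.mem_of_tendsto (hlim x)
    (Eventually.of_forall fun n => (hg _ _ (hgs (k n))).1)), ?_⟩
  have h1 : Tendsto (fun n => f (𝔰.r (s (k n)) x)) atTop (𝓝 (f (𝔰.r t x))) :=
    (hf.tendsto _).comp (hlim x)
  have h2 : Tendsto (fun n => f (𝔰.r (s n) x)) atTop (𝓝 (f x)) :=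
    hV.tendsto fun n => (hg _ _ (hgs n)).2
  exact tendsto_nhds_unique h1 (h2.comp hk.tendsto_atTop)

lemma exists_countable_subset_range_closure (s : 𝔰.Γ) {A : Set P} {x : P} (hx : x ∈ closure A) :
    ∃ A' ⊆ A, A'.Countable ∧ 𝔰.r s x ∈ closure (𝔰.r s '' A') := by
  have := 𝔰.metrizable s
  let q : P → range (𝔰.r s) := fun y => ⟨𝔰.r s y, mem_range_self y⟩
  have hq : Continuous q := by fun_prop
  have h1 : q x ∈ closure (q '' A) := image_closure_subset_closure_image hq (mem_image_of_mem q hx)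
  obtain ⟨u, huA, hu⟩ := mem_closure_iff_seq_limit.1 h1
  choose a haA ha using huA
  refine ⟨range a, ?_, countable_range a, ?_⟩
  · rintro _ ⟨n, rfl⟩
    exact haA n
  · have h2 : Tendsto (fun n => 𝔰.r s (a n)) atTop (𝓝 (𝔰.r s x)) := by
      have := (continuous_subtype_val.tendsto _).comp hu
      refine this.congr fun n => ?_
      simp [← ha n, q]
    exact mem_closure_of_tendsto h2
      (Eventually.of_forall fun n => ⟨a n, mem_range_self n, rfl⟩)

/-- A point `x` in the closures of two subsets `A`, `B` of the induced set has images `r t x`,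
for arbitrarily large `t`, lying in the closures of countable subsets of `A` and of `B`.
For `x` in the induced set this is countable tightness. -/
lemma exists_mem_closure_inter [T2Space P] [CompactSpace P] {A B : Set P}
    (hA : A ⊆ 𝔰.inducedSet) (hB : B ⊆ 𝔰.inducedSet) {x : P} (hxA : x ∈ closure A)
    (hxB : x ∈ closure B) (s₀ : 𝔰.Γ) :
    ∃ t, s₀ ≤ t ∧ ∃ A' ⊆ A, ∃ B' ⊆ B, A'.Countable ∧ B'.Countable ∧
      𝔰.r t x ∈ closure A' ∧ 𝔰.r t x ∈ closure B' := by
  choose FA hFA hFAc hFAx using fun s => 𝔰.exists_countable_subset_range_closure s hxA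
  choose FB hFB hFBc hFBx using fun s => 𝔰.exists_countable_subset_range_closure s hxB
  have hnext : ∀ s, ∃ t, s ≤ t ∧ ∀ a ∈ FA s ∪ FB s, 𝔰.r t a = a := fun s =>
    𝔰.exists_fix_of_countable ((hFAc s).union (hFBc s))
      (union_subset ((hFA s).trans hA) ((hFB s).trans hB)) s
  choose nx hnx hnxf using hnext
  let f : ℕ → 𝔰.Γ := fun n => Nat.rec s₀ (fun _ s => nx s) n
  have hf : Monotone f := monotone_nat_of_le_succ fun n => hnx (f n)
  obtain ⟨t, ht, k, hk, hlim⟩ := 𝔰.sup_seq_mono f hf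
  have key : ∀ F : 𝔰.Γ → Set P, (∀ s, 𝔰.r s x ∈ closure (𝔰.r s '' F s)) →
      (∀ s, ∀ a ∈ F s, 𝔰.r (nx s) a = a) → 𝔰.r t x ∈ closure (⋃ n, F (f n)) := by
    intro F hF hFf
    set C := closure (⋃ n, F (f n)) with hC
    have hCfix : ∀ y ∈ C, 𝔰.r t y = y := by
      intro y hy
      refine 𝔰.fix_of_mem_closure (fun a ha => ?_) hy
      obtain ⟨n, hn⟩ := mem_iUnion.1 ha
      exact 𝔰.fix_of_le (ht (n + 1)) (hFf _ _ hn)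
    have hCcomp : IsCompact C := isClosed_closure.isCompact
    obtain ⟨y, hy⟩ : (⋂ n, C ∩ {y | 𝔰.r (f n) y = 𝔰.r (f n) x}).Nonempty := by
      apply IsCompact.nonempty_iInter_of_sequence_nonempty_isCompact_isClosed
      · rintro n y ⟨hyC, hy⟩
        refine ⟨hyC, ?_⟩
        have hle := hf (Nat.le_succ n)
        have h1 := (𝔰.comp_eq_of_le _ _ hle y).1
        have h2 := (𝔰.comp_eq_of_le _ _ hle x).1
        simp only [mem_ofPred_eq] at hy ⊢
        rw [← h1, ← h2, hy]
      · intro n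
        have h1 : 𝔰.r (f n) x ∈ 𝔰.r (f n) '' C := by
          have hcl : IsClosed (𝔰.r (f n) '' C) := (hCcomp.image (𝔰.r (f n)).continuous).isClosed
          refine closure_minimal (image_mono ?_) hcl (hF (f n))
          exact (subset_iUnion (fun n => F (f n)) n).trans subset_closure
        obtain ⟨y, hyC, hy⟩ := h1
        exact ⟨y, hyC, hy⟩
      · exact hCcomp.inter_right (isClosed_eq (𝔰.r _).continuous continuous_const)
      · intro n
        exact isClosed_closure.inter (isClosed_eq (𝔰.r _).continuous continuous_const)
    simp only [mem_iInter, mem_inter_iff, mem_ofPred_eq] at hy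
    have h1 : 𝔰.r t y = 𝔰.r t x := 𝔰.eq_of_forall_seq hlim fun n => (hy n).2
    rw [← h1, hCfix y (hy 0).1]
    exact (hy 0).1
  refine ⟨t, ht 0, ⋃ n, FA (f n), iUnion_subset fun n => hFA _, ⋃ n, FB (f n),
    iUnion_subset fun n => hFB _, countable_iUnion fun n => hFAc _,
    countable_iUnion fun n => hFBc _, key FA hFAx fun s a ha => hnxf s a (Or.inl ha),
    key FB hFBx fun s a ha => hnxf s a (Or.inr ha)⟩

/-- Countable tightness of the induced set. -/
lemma exists_countable_mem_closure [T2Space P] [CompactSpace P] {A : Set P}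
    (hA : A ⊆ 𝔰.inducedSet) {x : P} (hx : x ∈ 𝔰.inducedSet) (hxA : x ∈ closure A) :
    ∃ A' ⊆ A, A'.Countable ∧ x ∈ closure A' := by
  obtain ⟨s, hs⟩ := 𝔰.mem_inducedSet_iff.1 hx
  obtain ⟨t, hst, A', hA', -, -, hc, -, h, -⟩ := 𝔰.exists_mem_closure_inter hA hA hxA hxA s
  rw [𝔰.fix_of_le hst hs] at h
  exact ⟨A', hA', hc, h⟩

end RetractionalSkeleton

/-! ### Finitary closure systems -/

/-- `N` is closed under the finitary set-valued operation `c`. -/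
def ClosedUnder {E : Type u} (c : Finset E → Set E) (N : Set E) : Prop :=
  ∀ F : Finset E, ↑F ⊆ N → c F ⊆ N

/-- The smallest set containing `A` that is closed under `c`. -/
def hull {E : Type u} (c : Finset E → Set E) (A : Set E) : Set E :=
  ⋂₀ {N | A ⊆ N ∧ ClosedUnder c N}

section Hull

variable {E : Type u} {c : Finset E → Set E}

lemma subset_hull (A : Set E) : A ⊆ hull c A := subset_sInter fun _ h => h.1

lemma hull_subset {A N : Set E} (hA : A ⊆ N) (hN : ClosedUnder c N) : hull c A ⊆ N :=
  sInter_subset_of_mem ⟨hA, hN⟩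

lemma closedUnder_hull (A : Set E) : ClosedUnder c (hull c A) := fun F hF =>
  subset_sInter fun _ hN => hN.2 F (hF.trans (hull_subset hN.1 hN.2))

lemma hull_mono {A B : Set E} (h : A ⊆ B) : hull c A ⊆ hull c B :=
  hull_subset (h.trans (subset_hull B)) (closedUnder_hull B)

lemma closedUnder_iUnion {ι : Type*} [Nonempty ι] {N : ι → Set E} (hd : Directed (· ⊆ ·) N)
    (hN : ∀ i, ClosedUnder c (N i)) : ClosedUnder c (⋃ i, N i) := by
  intro F hF
  obtain ⟨i, hi⟩ := hd.exists_mem_subset_of_finset_subset_biUnion hF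
  exact (hN i F hi).trans (subset_iUnion N i)

lemma countable_hull (hc : ∀ F, (c F).Countable) {A : Set E} (hA : A.Countable) :
    (hull c A).Countable := by
  let step : Set E → Set E := fun B => B ∪ ⋃ F ∈ {F : Finset E | ↑F ⊆ B}, c F
  let S : ℕ → Set E := fun n => Nat.rec A (fun _ B => step B) n
  have hmono : Monotone S := monotone_nat_of_le_succ fun n => subset_union_left
  have hcount : ∀ n, (S n).Countable := by
    intro n
    induction n with
    | zero => exact hA
    | succ n ih =>
      refine ih.union (Countable.biUnion ?_ fun F _ => hc F)
      have h2 := (countable_ofPred_finite_subset ih).preimage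
        (f := fun F : Finset E => (F : Set E)) Finset.coe_injective
      refine h2.mono fun F hF => ?_
      exact And.intro F.finite_toSet hF
  have hcl : ClosedUnder c (⋃ n, S n) := by
    intro F hF
    obtain ⟨n, hn⟩ :=
      (hmono.directed_le).exists_mem_subset_of_finset_subset_biUnion hF
    refine Subset.trans ?_ (subset_iUnion S (n + 1))
    exact (subset_biUnion_of_mem (u := c) (show F ∈ {F : Finset E | ↑F ⊆ S n} from hn)).trans
      subset_union_right
  exact (countable_iUnion hcount).mono (hull_subset (subset_iUnion S 0) hcl)

end Hull

/-! ### Retractions from sets of points and functions -/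

section Good

variable {X : Type u} [TopologicalSpace X]

/-- The pair `(S, F)` of a set of points and a set of continuous functions is good when every
point of `X` agrees, with respect to all functions in `F`, with exactly one point of the
closure of `S`. -/
structure GoodPair (S : Set X) (F : Set C(X, ℝ)) : Prop where
  exists_eq : ∀ x, ∃ y ∈ closure S, ∀ f ∈ F, f y = f x
  sep : ∀ x ∈ closure S, ∀ y ∈ closure S, (∀ f ∈ F, f x = f y) → x = y

variable [CompactSpace X]

lemma GoodPair.exists_retraction {S : Set X} {F : Set C(X, ℝ)} (h : GoodPair S F) :
    ∃ r : C(X, X), ∀ x, r x ∈ closure S ∧ ∀ f ∈ F, f (r x) = f x := by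
  choose r hr hrf using h.exists_eq
  let e : X → (F → ℝ) := fun x f => f.1 x
  have he : Continuous e := by fun_prop
  let g : closure S → (F → ℝ) := fun x => e x
  have hg : Continuous g := he.comp continuous_subtype_val
  have hinj : Function.Injective g := by
    intro x y hxy
    exact Subtype.ext (h.sep x x.2 y y.2 fun f hf => congrFun hxy ⟨f, hf⟩)
  have hcs : CompactSpace (closure S) := isCompact_iff_compactSpace.1 isClosed_closure.isCompact
  have hemb := hg.isClosedEmbedding hinj
  let r' : X → closure S := fun x => ⟨r x, hr x⟩
  have hr' : Continuous r' := by
    rw [hemb.isEmbedding.continuous_iff]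
    have : g ∘ r' = e := by
      funext x f
      exact hrf x f.1 f.2
    rwa [this]
  exact ⟨⟨r, continuous_subtype_val.comp hr'⟩, fun x => ⟨hr x, hrf x⟩⟩

/-- The retraction of `X` onto `closure S` given by a good pair `(S, F)`. -/
noncomputable def GoodPair.retr {S : Set X} {F : Set C(X, ℝ)} (h : GoodPair S F) : C(X, X) :=
  h.exists_retraction.choose

lemma GoodPair.retr_mem {S : Set X} {F : Set C(X, ℝ)} (h : GoodPair S F) (x : X) :
    h.retr x ∈ closure S := (h.exists_retraction.choose_spec x).1

lemma GoodPair.apply_retr {S : Set X} {F : Set C(X, ℝ)} (h : GoodPair S F) {f : C(X, ℝ)}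
    (hf : f ∈ F) (x : X) : f (h.retr x) = f x := (h.exists_retraction.choose_spec x).2 f hf

lemma GoodPair.retr_eq_iff {S : Set X} {F : Set C(X, ℝ)} (h : GoodPair S F) {x y : X} :
    h.retr x = h.retr y ↔ ∀ f ∈ F, f x = f y := by
  constructor
  · intro he f hf
    rw [← h.apply_retr hf x, he, h.apply_retr hf y]
  · intro he
    refine h.sep _ (h.retr_mem x) _ (h.retr_mem y) fun f hf => ?_
    rw [h.apply_retr hf, h.apply_retr hf, he f hf]

lemma GoodPair.retr_eq_self {S : Set X} {F : Set C(X, ℝ)} (h : GoodPair S F) {x : X}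
    (hx : x ∈ closure S) : h.retr x = x :=
  h.sep _ (h.retr_mem x) _ hx fun _ hf => h.apply_retr hf x

/-- Finitely many continuous functions take, on a suitable countable set of points, values dense
in the set of all values they take jointly. -/
lemma exists_countable_approx {X : Type u} [TopologicalSpace X]
    (F : Finset C(X, ℝ)) :
    ∃ Q : Set X, Q.Countable ∧ ∀ x, ∀ ε > 0, ∃ q ∈ Q, ∀ f ∈ F, |f q - f x| < ε := by
  let e : X → (F → ℝ) := fun x f => f.1 x
  obtain ⟨D, hDs, hDc, hDd⟩ := (IsSeparable.of_separableSpace (range e)).exists_countable_dense_subset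
  have : ∀ d : D, ∃ x, e x = d := fun d => hDs d.2
  choose g hg using this
  have := hDc.to_subtype
  refine ⟨range g, countable_range g, fun x ε hε => ?_⟩
  obtain ⟨d, hd, hdist⟩ := Metric.mem_closure_iff.1 (hDd (mem_range_self x)) ε hε
  refine ⟨g ⟨d, hd⟩, mem_range_self _, fun f hf => ?_⟩
  have h1 : dist (e (g ⟨d, hd⟩)) (e x) < ε := by rw [hg, dist_comm]; exact hdist
  have h2 := (dist_pi_lt_iff hε).1 h1 ⟨f, hf⟩
  simpa [e, Real.dist_eq] using h2

/-- The space of objects to which the closing-off arguments apply: points of `X`, continuous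
functions on `X`, and further objects from `T`. -/
abbrev Obj (X : Type u) [TopologicalSpace X] (T : Type u) : Type u := X ⊕ (C(X, ℝ) ⊕ T)

/-- A function on `X`, as an object. -/
def Obj.fn {X : Type u} [TopologicalSpace X] {T : Type u} (f : C(X, ℝ)) : Obj X T :=
  Sum.inr (Sum.inl f)

/-- An element of `T`, as an object. -/
def Obj.ax {X : Type u} [TopologicalSpace X] {T : Type u} (t : T) : Obj X T :=
  Sum.inr (Sum.inr t)

lemma Obj.fn_injective {X : Type u} [TopologicalSpace X] {T : Type u} :
    Function.Injective (Obj.fn : C(X, ℝ) → Obj X T) := by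
  intro f g h
  simpa [Obj.fn] using h

/-- The points of `X` in `N`. -/
def Obj.pts {X : Type u} [TopologicalSpace X] {T : Type u} (N : Set (Obj X T)) : Set X :=
  {x | Sum.inl x ∈ N}

/-- The functions on `X` in `N`. -/
def Obj.fns {X : Type u} [TopologicalSpace X] {T : Type u} (N : Set (Obj X T)) : Set C(X, ℝ) :=
  {f | Obj.fn f ∈ N}

/-- The objects from `T` in `N`. -/
def Obj.aux {X : Type u} [TopologicalSpace X] {T : Type u} (N : Set (Obj X T)) : Set T :=
  {t | Obj.ax t ∈ N}

open Classical in
/-- The operation adding, for finitely many functions, countably many points at which their joint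
values are dense. -/
noncomputable def approxOp (X : Type u) [TopologicalSpace X] (T : Type u)
    (F : Finset (Obj X T)) : Set (Obj X T) :=
  Sum.inl '' (exists_countable_approx
    (F.preimage Obj.fn Obj.fn_injective.injOn)).choose

lemma countable_approxOp {X : Type u} [TopologicalSpace X] {T : Type u}
    (F : Finset (Obj X T)) : (approxOp X T F).Countable :=
  (exists_countable_approx _).choose_spec.1.image _

lemma exists_eq_of_closedUnder {T : Type u} {c : Finset (Obj X T) → Set (Obj X T)}
    (hc : ∀ F, approxOp X T F ⊆ c F) {N : Set (Obj X T)} (hN : ClosedUnder c N) (x : X) :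
    ∃ y ∈ closure (Obj.pts N), ∀ f ∈ Obj.fns N, f y = f x := by
  classical
  have hne : (closure (Obj.pts N) ∩ ⋂ i : Obj.fns N × ℕ,
      {y | |i.1.1 y - i.1.1 x| ≤ 1 / ((i.2 : ℝ) + 1)}).Nonempty := by
    refine isClosed_closure.isCompact.inter_iInter_nonempty _ (fun i => ?_) (fun I => ?_)
    · exact isClosed_le (by fun_prop) continuous_const
    · let G : Finset (Obj X T) := I.image fun i => Obj.fn i.1.1
      have hGN : ↑G ⊆ N := by
        intro e he
        simp only [G, Finset.coe_image, mem_image] at he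
        obtain ⟨i, -, rfl⟩ := he
        exact i.1.2
      obtain ⟨ε, hε, hεI⟩ : ∃ ε > (0 : ℝ), ∀ i ∈ I, ε ≤ 1 / ((i.2 : ℝ) + 1) := by
        refine ⟨1 / (((I.sup Prod.snd : ℕ) : ℝ) + 1), by positivity, fun i hi => ?_⟩
        have : (i.2 : ℝ) ≤ ((I.sup Prod.snd : ℕ) : ℝ) := by
          exact_mod_cast Finset.le_sup (f := Prod.snd) hi
        gcongr
      obtain ⟨q, hq, hqf⟩ := (exists_countable_approx (G.preimage Obj.fn Obj.fn_injective.injOn)).choose_spec.2 x ε hε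
      have hqN : q ∈ Obj.pts N := hN G hGN (hc G ⟨q, hq, rfl⟩)
      refine ⟨q, subset_closure hqN, mem_iInter₂.2 fun i hi => ?_⟩
      refine (hqf i.1.1 ?_).le.trans (hεI i hi)
      rw [Finset.mem_preimage]
      exact Finset.mem_image_of_mem (fun i : Obj.fns N × ℕ => (Obj.fn i.1.1 : Obj X T)) hi
  obtain ⟨y, hy, hyI⟩ := hne
  refine ⟨y, hy, fun f hf => ?_⟩
  by_contra hne
  have hpos : 0 < |f y - f x| := abs_pos.2 (sub_ne_zero.2 hne)
  obtain ⟨n, hn⟩ := exists_nat_one_div_lt hpos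
  have := mem_iInter.1 hyI (⟨f, hf⟩, n)
  simp only [mem_ofPred_eq] at this
  linarith

end Good

/-! ### From good closure systems to Corson compacta -/

section Corson

variable {X : Type u} [TopologicalSpace X] [CompactSpace X] {T : Type u}
  {c : Finset (Obj X T) → Set (Obj X T)}

/-- The retraction associated with the hull of `B`. -/
noncomputable def hullRetr (h : ∀ N, ClosedUnder c N → GoodPair (Obj.pts N) (Obj.fns N))
    (B : Set (Obj X T)) : C(X, X) :=
  (h (hull c B) (closedUnder_hull B)).retr

variable (h : ∀ N, ClosedUnder c N → GoodPair (Obj.pts N) (Obj.fns N))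

lemma hullRetr_eq_iff {B : Set (Obj X T)} {x y : X} :
    hullRetr h B x = hullRetr h B y ↔ ∀ f ∈ Obj.fns (hull c B), f x = f y :=
  GoodPair.retr_eq_iff _

lemma hullRetr_eq_self {B : Set (Obj X T)} {x : X} (hx : x ∈ closure (Obj.pts (hull c B))) :
    hullRetr h B x = x :=
  GoodPair.retr_eq_self _ hx

lemma hullRetr_mem (B : Set (Obj X T)) (x : X) :
    hullRetr h B x ∈ closure (Obj.pts (hull c B)) :=
  GoodPair.retr_mem _ x

lemma hullRetr_mono_eq {A B : Set (Obj X T)} (hAB : A ⊆ B) {x y : X}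
    (he : hullRetr h B x = hullRetr h B y) : hullRetr h A x = hullRetr h A y :=
  (hullRetr_eq_iff h).2 fun f hf => (hullRetr_eq_iff h).1 he f (hull_mono hAB hf)

lemma hullRetr_comp_of_subset {A B : Set (Obj X T)} (hAB : A ⊆ B) (x : X) :
    hullRetr h A (hullRetr h B x) = hullRetr h A x :=
  hullRetr_mono_eq h hAB (hullRetr_eq_self h (hullRetr_mem h B x))

lemma closure_pts_mono {A B : Set (Obj X T)} (hAB : A ⊆ B) :
    closure (Obj.pts (hull c A)) ⊆ closure (Obj.pts (hull c B)) :=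
  closure_mono fun _ hx => hull_mono hAB hx

lemma hullRetr_comp_of_superset {A B : Set (Obj X T)} (hAB : A ⊆ B) (x : X) :
    hullRetr h B (hullRetr h A x) = hullRetr h A x :=
  hullRetr_eq_self h (closure_pts_mono hAB (hullRetr_mem h A x))

/-- A family `𝓕` of functions, point-countable in the sense that every point is a zero of all but
countably many members, which distinguishes the same pairs of points as the hull of `B`. -/
def HasPointCountable (h : ∀ N, ClosedUnder c N → GoodPair (Obj.pts N) (Obj.fns N))
    (B : Set (Obj X T)) : Prop :=
  ∃ 𝓕 : Set C(X, ℝ), (∀ x y, (∀ f ∈ 𝓕, f x = f y) ↔ hullRetr h B x = hullRetr h B y) ∧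
    ∀ x, {f ∈ 𝓕 | f x ≠ 0}.Countable

lemma hasPointCountable_of_countable (hc : ∀ F, (c F).Countable) {B : Set (Obj X T)}
    (hB : B.Countable) : HasPointCountable h B := by
  refine ⟨Obj.fns (hull c B), fun x y => (hullRetr_eq_iff h).symm, fun x => ?_⟩
  exact ((countable_hull hc hB).preimage Obj.fn_injective).mono fun f hf => hf.1

section Chain

variable {ι : Type u} [LinearOrder ι] (e : ι → Obj X T)

lemma hull_image_subset {I : Set ι} (hne : I.Nonempty) :
    hull c (e '' I) ⊆ ⋃ i : I, hull c (e '' Iic i.1) := by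
  have : Nonempty I := hne.to_subtype
  refine hull_subset ?_ (closedUnder_iUnion ?_ fun i => closedUnder_hull _)
  · rintro _ ⟨i, hi, rfl⟩
    exact mem_iUnion.2 ⟨⟨i, hi⟩, subset_hull _ ⟨i, mem_Iic.2 le_rfl, rfl⟩⟩
  · refine Monotone.directed_le fun i j hij => ?_
    exact hull_mono (image_mono (Iic_subset_Iic.2 hij))

lemma hullRetr_eq_of_forall_Iic {I : Set ι} {x y : X}
    (h0 : hullRetr h ∅ x = hullRetr h ∅ y)
    (hI : ∀ i ∈ I, hullRetr h (e '' Iic i) x = hullRetr h (e '' Iic i) y) :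
    hullRetr h (e '' I) x = hullRetr h (e '' I) y := by
  rcases I.eq_empty_or_nonempty with rfl | hne
  · simpa using h0
  · refine (hullRetr_eq_iff h).2 fun f hf => ?_
    obtain ⟨i, hi⟩ := mem_iUnion.1 (hull_image_subset e hne hf)
    exact (hullRetr_eq_iff h).1 (hI i.1 i.2) f hi

/-- Along a transfinite chain of hulls the retractions move a given point only countably often. -/
lemma countable_jumps [WellFoundedLT ι]
    (htight : ∀ (A : Set X) (x : X), x ∈ closure A → ∃ A' ⊆ A, A'.Countable ∧ x ∈ closure A')
    (x : X) :
    {i | hullRetr h (e '' Iic i) x ≠ hullRetr h (e '' Iio i) x}.Countable := by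
  set J := {i | hullRetr h (e '' Iic i) x ≠ hullRetr h (e '' Iio i) x} with hJ
  by_contra hunc
  -- `I` is the shortest initial segment containing uncountably many jumps
  obtain ⟨I, hlow, hIunc, hImin⟩ : ∃ I : Set ι, IsLowerSet I ∧ ¬ (J ∩ I).Countable ∧
      ∀ b ∈ I, (J ∩ Iio b).Countable := by
    by_cases hex : ∃ b, ¬ (J ∩ Iio b).Countable
    · obtain ⟨b, hb, hmin⟩ := WellFounded.has_min (wellFounded_lt (α := ι)) {b | ¬ (J ∩ Iio b).Countable} hex
      refine ⟨Iio b, isLowerSet_Iio b, hb, fun d hd => ?_⟩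
      by_contra hcon
      exact hmin d hcon hd
    · push Not at hex
      exact ⟨univ, isLowerSet_univ, by simpa using hunc, fun b _ => hex b⟩
  have hIne : I.Nonempty := by
    rcases I.eq_empty_or_nonempty with rfl | hne
    · simp at hIunc
    · exact hne
  obtain ⟨Q, hQ, hQc, hyQ⟩ := htight _ _ (hullRetr_mem h (e '' I) x)
  have hb : ∀ q : Q, ∃ b ∈ I, q.1 ∈ Obj.pts (hull c (e '' Iic b)) := by
    intro q
    obtain ⟨i, hi⟩ := mem_iUnion.1 (hull_image_subset e hIne (hQ q.2))
    exact ⟨i.1, i.2, hi⟩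
  choose b hbI hbq using hb
  have := hQc.to_subtype
  obtain ⟨i, hiI, hi⟩ : ∃ i ∈ I, ∀ q, b q < i := by
    by_contra hcon
    push Not at hcon
    refine hIunc ((countable_iUnion fun q =>
      ((hImin (b q) (hbI q)).union (countable_singleton (b q)))).mono ?_)
    rintro j ⟨hjJ, hjI⟩
    obtain ⟨q, hq⟩ := hcon j hjI
    refine mem_iUnion.2 ⟨q, ?_⟩
    rcases hq.lt_or_eq with hlt | heq
    · exact Or.inl ⟨hjJ, hlt⟩
    · exact Or.inr heq
  have hy : hullRetr h (e '' I) x ∈ closure (Obj.pts (hull c (e '' Iio i))) := by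
    refine closure_mono (fun q hq => ?_) hyQ
    exact hull_mono (image_mono (Iic_subset_Iio.2 (hi ⟨q, hq⟩))) (hbq ⟨q, hq⟩)
  have hstab : ∀ S ⊆ I, Iio i ⊆ S →
      hullRetr h (e '' S) x = hullRetr h (e '' I) x := by
    intro S hSI hS
    rw [← hullRetr_comp_of_subset h (image_mono hSI) x]
    exact hullRetr_eq_self h (closure_pts_mono (image_mono hS) hy)
  refine hIunc ((hImin i hiI).mono ?_)
  rintro j ⟨hjJ, hjI⟩
  refine ⟨hjJ, ?_⟩
  by_contra hij
  have hij : i ≤ j := not_lt.1 hij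
  apply hjJ
  rw [hstab (Iic j) (fun k hk => hlow hk hjI) fun k hk => (lt_of_lt_of_le hk hij).le,
    hstab (Iio j) (fun k hk => hlow (le_of_lt hk) hjI) fun k hk => lt_of_lt_of_le hk hij]

lemma hasPointCountable_range [WellFoundedLT ι] (hc : ∀ F, (c F).Countable)
    (htight : ∀ (A : Set X) (x : X), x ∈ closure A → ∃ A' ⊆ A, A'.Countable ∧ x ∈ closure A')
    (hι : ∀ i, HasPointCountable h (e '' Iic i)) : HasPointCountable h (range e) := by
  obtain ⟨𝓕₀, h0, h0c⟩ := hasPointCountable_of_countable h hc countable_empty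
  choose 𝓕 h𝓕 h𝓕c using hι
  refine ⟨𝓕₀ ∪ ⋃ i, (fun f : C(X, ℝ) => f - f.comp (hullRetr h (e '' Iio i))) '' 𝓕 i,
    fun x y => ⟨fun hxy => ?_, fun hxy => ?_⟩, fun x => ?_⟩
  · have h00 : hullRetr h ∅ x = hullRetr h ∅ y := (h0 x y).1 fun f hf => hxy f (Or.inl hf)
    rw [← image_univ]
    refine hullRetr_eq_of_forall_Iic h e h00 fun i _ => ?_
    induction i using WellFoundedLT.induction with
    | ind i ih =>
      have hlt : hullRetr h (e '' Iio i) x = hullRetr h (e '' Iio i) y :=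
        hullRetr_eq_of_forall_Iic h e h00 fun j hj => ih j hj (mem_univ j)
      refine (h𝓕 i x y).1 fun f hf => ?_
      have := hxy _ (Or.inr (mem_iUnion.2 ⟨i, f, hf, rfl⟩))
      simpa [hlt] using this
  · rintro f (hf | hf)
    · exact (h0 x y).2 (hullRetr_mono_eq h (empty_subset _) hxy) f hf
    · obtain ⟨i, g, hg, rfl⟩ := mem_iUnion.1 hf
      have h1 := (h𝓕 i x y).2 (hullRetr_mono_eq h (image_subset_range _ _) hxy) g hg
      have h2 := hullRetr_mono_eq h (image_subset_range e (Iio i)) hxy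
      simp [h1, h2]
  · have hJ := countable_jumps h e htight x
    refine ((h0c x).union (hJ.biUnion fun i _ =>
      (((h𝓕c i x).union (h𝓕c i (hullRetr h (e '' Iio i) x))).image
        (fun f : C(X, ℝ) => f - f.comp (hullRetr h (e '' Iio i)))))).mono ?_
    rintro f ⟨hf | hf, hfx⟩
    · exact Or.inl ⟨hf, hfx⟩
    · obtain ⟨i, g, hg, rfl⟩ := mem_iUnion.1 hf
      simp only [ContinuousMap.coe_sub, ContinuousMap.coe_comp, Pi.sub_apply,
        Function.comp_apply] at hfx
      refine Or.inr (mem_iUnion₂.2 ⟨i, fun heq => hfx ?_, g, ?_, rfl⟩)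
      · have := (h𝓕 i x (hullRetr h (e '' Iio i) x)).2 (by
          rw [heq, hullRetr_comp_of_superset h (image_mono Iio_subset_Iic_self)]) g hg
        rw [this, sub_self]
      · by_contra hcon
        simp only [mem_union, mem_ofPred_eq, not_or, not_and, not_not] at hcon
        rw [hcon.1 hg, hcon.2 hg, sub_self] at hfx
        exact hfx rfl

end Chain

lemma hasPointCountable (hc : ∀ F, (c F).Countable)
    (htight : ∀ (A : Set X) (x : X), x ∈ closure A → ∃ A' ⊆ A, A'.Countable ∧ x ∈ closure A')
    (B : Set (Obj X T)) : HasPointCountable h B := by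
  induction hκ : Cardinal.mk B using WellFoundedLT.induction generalizing B with
  | ind κ ih =>
    by_cases hB : B.Countable
    · exact hasPointCountable_of_countable h hc hB
    have hinf : Cardinal.aleph0 ≤ κ := by
      rw [← hκ]
      by_contra hcon
      exact hB ((Cardinal.lt_aleph0_iff_set_finite.1 (not_le.1 hcon)).countable)
    have hcard : Cardinal.mk κ.ord.ToType = Cardinal.mk B := by
      rw [hκ, Cardinal.mk_ord_toType]
    obtain ⟨eq⟩ := Cardinal.eq.1 hcard
    have hr : range (fun i => (eq i : Obj X T)) = B := by
      rw [range_comp' Subtype.val eq, eq.range_eq_univ, image_univ, Subtype.range_coe]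
    rw [← hr]
    refine hasPointCountable_range h _ hc htight fun i => ih _ ?_ _ rfl
    refine lt_of_le_of_lt Cardinal.mk_image_le ?_
    have h1 : Cardinal.mk (Iic i) ≤ Cardinal.mk (Iio i) + 1 := by
      rw [← Iio_insert]
      exact Cardinal.mk_insert_le
    have hlt : Cardinal.mk (Iio i) < κ := by simpa using Cardinal.mk_Iio_lt i
    exact h1.trans_lt (Cardinal.add_lt_of_lt hinf hlt
      (Cardinal.one_lt_aleph0.trans_le hinf))

/-- A compact countably tight space is Corson as soon as all sets closed under some
countable-valued operation give good pairs. -/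
lemma isCorsonCompact_of_goodPair [T2Space X]
    (h : ∀ N, ClosedUnder c N → GoodPair (Obj.pts N) (Obj.fns N)) (hc : ∀ F, (c F).Countable)
    (htight : ∀ (A : Set X) (x : X), x ∈ closure A → ∃ A' ⊆ A, A'.Countable ∧ x ∈ closure A') :
    IsCorsonCompact X := by
  obtain ⟨𝓕, h𝓕, h𝓕c⟩ := hasPointCountable h hc htight univ
  have hid : ∀ x, hullRetr h univ x = x := fun x =>
    hullRetr_eq_self h (subset_closure (subset_hull univ (mem_univ _)))
  let e : X → (𝓕 → ℝ) := fun x f => f.1 x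
  have he : Continuous e := by fun_prop
  have hinj : Function.Injective e := by
    intro x y hxy
    have := (h𝓕 x y).1 fun f hf => congrFun hxy ⟨f, hf⟩
    rwa [hid, hid] at this
  refine ⟨𝓕, range e, isCompact_range he, ?_, ⟨(he.isClosedEmbedding hinj).isEmbedding.toHomeomorph⟩⟩
  rintro _ ⟨x, rfl⟩
  refine ((h𝓕c x).preimage (f := fun f : 𝓕 => f.1) Subtype.val_injective).mono fun f hf => ?_
  exact And.intro f.2 hf

/-- In a countably tight space it suffices to check the separation property of good pairs for
countable closed sets. -/
lemma goodPair_of_countable (hca : ∀ F, approxOp X T F ⊆ c F) (hc : ∀ F, (c F).Countable)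
    (htight : ∀ (A : Set X) (x : X), x ∈ closure A → ∃ A' ⊆ A, A'.Countable ∧ x ∈ closure A')
    (hsep : ∀ N, N.Countable → ClosedUnder c N → ∀ x ∈ closure (Obj.pts N),
      ∀ y ∈ closure (Obj.pts N), (∀ f ∈ Obj.fns N, f x = f y) → x = y)
    (N : Set (Obj X T)) (hN : ClosedUnder c N) : GoodPair (Obj.pts N) (Obj.fns N) := by
  refine ⟨exists_eq_of_closedUnder hca hN, fun x hx y hy hxy => ?_⟩
  obtain ⟨A, hA, hAc, hxA⟩ := htight _ _ hx
  obtain ⟨B, hB, hBc, hyB⟩ := htight _ _ hy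
  have hQ : Sum.inl '' (A ∪ B) ⊆ N := by
    rintro _ ⟨a, ha | ha, rfl⟩
    · exact hA ha
    · exact hB ha
  have hsub := hull_subset hQ hN
  refine hsep _ (countable_hull hc ((hAc.union hBc).image Sum.inl)) (closedUnder_hull _) x ?_ y ?_
    fun f hf => hxy f (hsub hf)
  · refine closure_mono (fun a ha => ?_) hxA
    exact subset_hull (Sum.inl '' (A ∪ B)) (mem_image_of_mem _ (Or.inl ha))
  · refine closure_mono (fun a ha => ?_) hyB
    exact subset_hull (Sum.inl '' (A ∪ B)) (mem_image_of_mem _ (Or.inr ha))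

end Corson

/-! ### Corson compacta from induced sets -/

/-- The points of a compact metrizable space are separated by countably many continuous
functions. -/
lemma exists_countable_separating_functions (Y : Type u) [TopologicalSpace Y] [CompactSpace Y]
    [MetrizableSpace Y] :
    ∃ 𝒢 : Set C(Y, ℝ), 𝒢.Countable ∧ ∀ x y, (∀ g ∈ 𝒢, g x = g y) → x = y := by
  let := metrizableSpaceMetric Y
  obtain ⟨D, hDc, hD⟩ := exists_countable_dense Y
  let g : Y → C(Y, ℝ) := fun d => ⟨fun y => dist y d, by fun_prop⟩
  refine ⟨g '' D, hDc.image g, fun x y hxy => ?_⟩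
  have hcl : IsClosed {d | dist x d = dist y d} := isClosed_eq (by fun_prop) (by fun_prop)
  have : ∀ d, dist x d = dist y d := by
    intro d
    exact closure_minimal (fun d hd => hxy (g d) ⟨d, hd, rfl⟩) hcl (hD d)
  simpa using this y

section Full

variable {X P : Type u} [TopologicalSpace X] [CompactSpace X]
  [TopologicalSpace P] [CompactSpace P] [T2Space P]

/-- A compact space which embeds into the set induced by a retractional skeleton of a compact
Hausdorff space is Corson. -/
theorem isCorsonCompact_of_full [T2Space X] (𝔰 : RetractionalSkeleton P) {ι : X → P}
    (hι : Continuous ι) (hinj : Function.Injective ι) (hD : ∀ x, ι x ∈ 𝔰.inducedSet) :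
    IsCorsonCompact X := by
  have hemb := hι.isClosedEmbedding hinj
  have htight : ∀ (A : Set X) (x : X), x ∈ closure A →
      ∃ A' ⊆ A, A'.Countable ∧ x ∈ closure A' := by
    intro A x hx
    obtain ⟨B, hBA, hBc, hxB⟩ := 𝔰.exists_countable_mem_closure (A := ι '' A)
      (by rintro _ ⟨a, -, rfl⟩; exact hD a) (hD x)
      (image_closure_subset_closure_image hι (mem_image_of_mem ι hx))
    obtain ⟨A', hA', rfl⟩ := subset_image_iff.1 hBA
    refine ⟨A', hA', (countable_of_injective_of_countable_image hinj.injOn hBc), ?_⟩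
    rwa [hemb.isEmbedding.closure_eq_preimage_closure_image]
  choose sx hsx using fun x => 𝔰.mem_inducedSet_iff.1 (hD x)
  choose w hw using 𝔰.directed
  have hG : ∀ s, ∃ 𝒢 : Set C(X, ℝ), 𝒢.Countable ∧
      ∀ x y, (∀ g ∈ 𝒢, g x = g y) → 𝔰.r s (ι x) = 𝔰.r s (ι y) := by
    intro s
    have := 𝔰.metrizable s
    have : CompactSpace (range (𝔰.r s)) :=
      isCompact_iff_compactSpace.1 (isCompact_range (𝔰.r s).continuous)
    obtain ⟨𝒢, h𝒢, hsep⟩ := exists_countable_separating_functions (range (𝔰.r s))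
    let q : C(X, range (𝔰.r s)) := ⟨fun x => ⟨𝔰.r s (ι x), mem_range_self _⟩, by fun_prop⟩
    refine ⟨(fun g => g.comp q) '' 𝒢, h𝒢.image _, fun x y hxy => ?_⟩
    have := hsep (q x) (q y) fun g hg => hxy (g.comp q) ⟨g, hg, rfl⟩
    exact congrArg Subtype.val this
  choose 𝒢 h𝒢c h𝒢 using hG
  let s₀ : 𝔰.Γ := Classical.arbitrary _
  let E := Obj X 𝔰.Γ
  let c : Finset E → Set E := fun F =>
    approxOp X 𝔰.Γ F ∪ ((⋃ s ∈ Obj.aux (F : Set E), ⋃ t ∈ Obj.aux (F : Set E), {Obj.ax (w s t)}) ∪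
      ((⋃ x ∈ Obj.pts (F : Set E), {Obj.ax (sx x)}) ∪
        ((⋃ s ∈ Obj.aux (F : Set E), Obj.fn '' 𝒢 s) ∪ {Obj.ax s₀})))
  have hpts : ∀ F : Finset E, (Obj.pts (F : Set E)).Countable := fun F =>
    F.countable_toSet.preimage Sum.inl_injective
  have haux : ∀ F : Finset E, (Obj.aux (F : Set E)).Countable := fun F =>
    F.countable_toSet.preimage (Sum.inr_injective.comp Sum.inr_injective)
  have hc : ∀ F, (c F).Countable := by
    intro F
    refine (countable_approxOp F).union (Countable.union ?_ (Countable.union ?_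
      (Countable.union ?_ (countable_singleton _))))
    · exact (haux F).biUnion fun s _ => (haux F).biUnion fun t _ => countable_singleton _
    · exact (hpts F).biUnion fun x _ => countable_singleton _
    · exact (haux F).biUnion fun s _ => (h𝒢c s).image _
  have hca : ∀ F, approxOp X 𝔰.Γ F ⊆ c F := fun F => subset_union_left
  refine isCorsonCompact_of_goodPair (c := c)
    (goodPair_of_countable hca hc htight fun N hNc hN x hx y hy hxy => ?_) hc htight
  classical
  have hN1 : ∀ s ∈ Obj.aux N, ∀ t ∈ Obj.aux N, w s t ∈ Obj.aux N := by
    intro s hs t ht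
    have hF : ((({Obj.ax s, Obj.ax t} : Finset E)) : Set E) ⊆ N := by
      intro e he
      simp only [Finset.coe_insert, Finset.coe_singleton, mem_insert_iff, mem_singleton_iff] at he
      rcases he with rfl | rfl
      · exact hs
      · exact ht
    refine hN _ hF (Or.inr (Or.inl ?_))
    refine mem_iUnion₂.2 ⟨s, by simp [Obj.aux], mem_iUnion₂.2 ⟨t, by simp [Obj.aux], rfl⟩⟩
  have hN2 : ∀ x ∈ Obj.pts N, sx x ∈ Obj.aux N := by
    intro x hx
    have hF : ((({Sum.inl x} : Finset E)) : Set E) ⊆ N := by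
      simpa [Obj.pts] using hx
    refine hN _ hF (Or.inr (Or.inr (Or.inl ?_)))
    exact mem_iUnion₂.2 ⟨x, by simp [Obj.pts], rfl⟩
  have hN3 : ∀ s ∈ Obj.aux N, ∀ g ∈ 𝒢 s, g ∈ Obj.fns N := by
    intro s hs g hg
    have hF : ((({Obj.ax s} : Finset E)) : Set E) ⊆ N := by
      simpa [Obj.aux] using hs
    refine hN _ hF (Or.inr (Or.inr (Or.inr (Or.inl ?_))))
    exact mem_iUnion₂.2 ⟨s, by simp [Obj.aux], g, hg, rfl⟩
  have hN4 : s₀ ∈ Obj.aux N := hN ∅ (by simp) (Or.inr (Or.inr (Or.inr (Or.inr rfl))))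
  have hNaux : (Obj.aux N).Countable := hNc.preimage (Sum.inr_injective.comp Sum.inr_injective)
  obtain ⟨g, hg⟩ := hNaux.exists_eq_range ⟨s₀, hN4⟩
  have hgN : ∀ n, g n ∈ Obj.aux N := fun n => hg ▸ mem_range_self n
  let f : ℕ → 𝔰.Γ := fun n => Nat.rec (g 0) (fun m s => w s (g (m + 1))) n
  have hf : Monotone f := monotone_nat_of_le_succ fun n => (hw (f n) (g (n + 1))).1
  have hgf : ∀ n, g n ≤ f n := by
    intro n
    cases n with
    | zero => exact le_rfl
    | succ n => exact (hw (f n) (g (n + 1))).2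
  have hfN : ∀ n, f n ∈ Obj.aux N := by
    intro n
    induction n with
    | zero => exact hgN 0
    | succ n ih => exact hN1 _ ih _ (hgN _)
  obtain ⟨t, ht, k, -, hlim⟩ := 𝔰.sup_seq_mono f hf
  have hfix : ∀ z ∈ closure (Obj.pts N), 𝔰.r t (ι z) = ι z := by
    intro z hz
    refine 𝔰.fix_of_mem_closure (A := ι '' Obj.pts N) ?_
      (image_closure_subset_closure_image hι (mem_image_of_mem ι hz))
    rintro _ ⟨a, ha, rfl⟩
    obtain ⟨n, hn⟩ : sx a ∈ range g := hg ▸ hN2 a ha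
    exact 𝔰.fix_of_le ((hgf n).trans (ht n)) (hn ▸ hsx a)
  have heq := 𝔰.eq_of_forall_seq hlim fun n =>
    h𝒢 (f n) x y fun g hg => hxy g (hN3 _ (hfN n) g hg)
  rw [hfix x hx, hfix y hy] at heq
  exact hinj heq

end Full

/-! ### Projectional skeletons from good closure systems -/

section Projectional

variable {X : Type u} [TopologicalSpace X] [CompactSpace X] {T : Type u}

/-- Composition with a continuous self-map, as an operator of norm at most one on `C(X, ℝ)`. -/
noncomputable def compOp (r : C(X, X)) : C(X, ℝ) →L[ℝ] C(X, ℝ) :=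
  LinearMap.mkContinuous
    { toFun := fun f => f.comp r
      map_add' := fun _ _ => rfl
      map_smul' := fun _ _ => rfl } 1 (by
    intro f
    rw [one_mul, ContinuousMap.norm_le _ (norm_nonneg f)]
    exact fun x => f.norm_coe_le_norm (r x))

@[simp] lemma compOp_apply (r : C(X, X)) (f : C(X, ℝ)) (x : X) : compOp r f x = f (r x) := rfl

lemma norm_compOp_le (r : C(X, X)) : ‖compOp r‖ ≤ 1 :=
  LinearMap.mkContinuous_norm_le _ zero_le_one _

lemma GoodPair.isSeparable_range [T2Space X] {S : Set X} {F : Set C(X, ℝ)} (h : GoodPair S F)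
    (hF : F.Countable) : IsSeparable (range (compOp h.retr)) := by
  have := hF.to_subtype
  have hcs : CompactSpace (closure S) := isCompact_iff_compactSpace.1 isClosed_closure.isCompact
  let g : closure S → (F → ℝ) := fun x f => f.1 x
  have hg : Continuous g := by fun_prop
  have hinj : Function.Injective g := by
    intro x y hxy
    exact Subtype.ext (h.sep x x.2 y y.2 fun f hf => congrFun hxy ⟨f, hf⟩)
  have hemb := (hg.isClosedEmbedding hinj).isEmbedding
  have hsc : SecondCountableTopology (closure S) := hemb.secondCountableTopology
  let ρ : C(X, closure S) := ⟨fun x => ⟨h.retr x, h.retr_mem x⟩, by fun_prop⟩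
  have hsep : IsSeparable (range fun f : C(closure S, ℝ) => f.comp ρ) :=
    TopologicalSpace.isSeparable_range (ContinuousMap.continuous_precomp ρ)
  refine hsep.mono ?_
  rintro _ ⟨f, rfl⟩
  exact ⟨f.restrict (closure S), rfl⟩

/-- If the sets closed under a countable-valued operation give good pairs, then composition with
the corresponding retractions is a 1-projectional skeleton. -/
theorem has1ProjectionalSkeleton_of_goodPair [T2Space X]
    {c : Finset (Obj X T) → Set (Obj X T)} (hc : ∀ F, (c F).Countable)
    (h : ∀ N : Set (Obj X T), N.Countable → ClosedUnder c N →
      GoodPair (Obj.pts N) (Obj.fns N)) : Has1ProjectionalSkeleton C(X, ℝ) := by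
  let Idx := {N : Set (Obj X T) // N.Countable ∧ ClosedUnder c N}
  have hg : ∀ N : Idx, GoodPair (Obj.pts N.1) (Obj.fns N.1) := fun N => h N.1 N.2.1 N.2.2
  have hcl : ∀ {M N : Idx}, M ≤ N → closure (Obj.pts M.1) ⊆ closure (Obj.pts N.1) :=
    fun hMN => closure_mono fun x hx => hMN hx
  have hr1 : ∀ {M N : Idx}, M ≤ N → ∀ x, (hg N).retr ((hg M).retr x) = (hg M).retr x :=
    fun {M N} hMN x => (hg N).retr_eq_self (hcl hMN ((hg M).retr_mem x))
  have hr2 : ∀ {M N : Idx}, M ≤ N → ∀ x, (hg M).retr ((hg N).retr x) = (hg M).retr x :=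
    fun {M N} hMN x => (hg M).retr_eq_iff.2 fun f hf => (hg N).apply_retr (hMN hf) x
  let 𝔰 : ProjectionalSkeleton C(X, ℝ) :=
    { Γ := Idx
      po := inferInstance
      ne := ⟨⟨hull c ∅, countable_hull hc countable_empty, closedUnder_hull _⟩⟩
      directed := fun M N => ⟨⟨hull c (M.1 ∪ N.1), countable_hull hc (M.2.1.union N.2.1),
        closedUnder_hull _⟩, subset_union_left.trans (subset_hull _),
        subset_union_right.trans (subset_hull _)⟩
      P := fun N => compOp (hg N).retr
      idem := fun N f => by
        ext x
        simp [hr1 (le_refl N)]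
      separable := fun N => (hg N).isSeparable_range (N.2.1.preimage Obj.fn_injective)
      covers := fun f => by
        let N : Idx := ⟨hull c {Obj.fn f}, countable_hull hc (countable_singleton _),
          closedUnder_hull _⟩
        refine ⟨N, f, ?_⟩
        ext x
        exact (hg N).apply_retr (show Obj.fn f ∈ N.1 from subset_hull _ rfl) x
      comp_eq_of_le := fun M N hMN f => by
        constructor
        · ext x
          simp [hr1 hMN]
        · ext x
          simp [hr2 hMN]
      sup_seq := by
        intro S hS
        have hdir : Directed (· ⊆ ·) fun n => (S n).1 :=
          Monotone.directed_le (f := fun n => (S n).1) fun m n hmn => hS.monotone hmn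
        let N : Idx := ⟨⋃ n, (S n).1, countable_iUnion fun n => (S n).2.1,
          closedUnder_iUnion hdir fun n => (S n).2.2⟩
        have hSN : ∀ n, S n ≤ N := fun n => subset_iUnion (fun n => (S n).1) n
        refine ⟨N, ⟨?_, ?_⟩, Subset.antisymm ?_ ?_⟩
        · rintro _ ⟨n, rfl⟩
          exact hSN n
        · intro M hM
          exact iUnion_subset fun n => hM ⟨n, rfl⟩
        · rintro _ ⟨f, rfl⟩
          rw [Metric.mem_closure_iff]
          intro ε hε
          by_contra hcon
          push Not at hcon
          have hx : ∀ n, ∃ x, ε / 2 ≤ |f ((hg (S n)).retr x) - f ((hg N).retr x)| := by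
            intro n
            by_contra hn
            push Not at hn
            have h1 := hcon (compOp (hg (S n)).retr f) (mem_iUnion.2 ⟨n, f, rfl⟩)
            have h2 : dist (compOp (hg N).retr f) (compOp (hg (S n)).retr f) ≤ ε / 2 := by
              rw [ContinuousMap.dist_le (by positivity)]
              intro x
              rw [dist_comm, Real.dist_eq]
              exact (hn x).le
            linarith
          choose x hx using hx
          let U : Ultrafilter ℕ := hyperfilter ℕ
          let V : Ultrafilter (X × X) := U.map fun n => ((hg (S n)).retr (x n), (hg N).retr (x n))
          obtain ⟨⟨a, b⟩, -, hab⟩ := isCompact_univ.ultrafilter_le_nhds V (by simp)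
          have hta : Tendsto (fun n => ((hg (S n)).retr (x n), (hg N).retr (x n))) U (𝓝 (a, b)) :=
            hab
          have ht1 : Tendsto (fun n => (hg (S n)).retr (x n)) U (𝓝 a) :=
            (continuous_fst.tendsto _).comp hta
          have ht2 : Tendsto (fun n => (hg N).retr (x n)) U (𝓝 b) :=
            (continuous_snd.tendsto _).comp hta
          have hUat : (U : Filter ℕ) ≤ atTop := by
            rw [← Nat.cofinite_eq_atTop]
            exact hyperfilter_le_cofinite
          have hane : a = b := by
            refine (hg N).sep a ?_ b ?_ ?_
            · exact isClosed_closure.mem_of_tendsto ht1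
                (Eventually.of_forall fun n => hcl (hSN n) ((hg (S n)).retr_mem _))
            · exact isClosed_closure.mem_of_tendsto ht2
                (Eventually.of_forall fun n => (hg N).retr_mem _)
            · intro φ hφ
              obtain ⟨m, hm⟩ := mem_iUnion.1 hφ
              have e1 := (φ.continuous.tendsto _).comp ht1
              have e2 := (φ.continuous.tendsto _).comp ht2
              refine tendsto_nhds_unique (e1.congr' ?_) e2
              filter_upwards [hUat (eventually_ge_atTop m)] with n hn
              simp only [Function.comp_apply]
              rw [(hg N).apply_retr hφ,
                (hg (S n)).apply_retr (show Obj.fn φ ∈ (S n).1 from hS.monotone hn hm)]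
          have hlim : Tendsto (fun n => |f ((hg (S n)).retr (x n)) - f ((hg N).retr (x n))|) U
              (𝓝 |f a - f b|) :=
            (((f.continuous.tendsto _).comp ht1).sub ((f.continuous.tendsto _).comp ht2)).abs
          have := ge_of_tendsto' hlim hx
          rw [hane, sub_self, abs_zero] at this
          linarith
        · have hfix : range (compOp (hg N).retr) = {f | compOp (hg N).retr f = f} := by
            ext f
            constructor
            · rintro ⟨g, rfl⟩
              ext x
              simp [hr1 (le_refl N)]
            · intro hf
              exact ⟨f, hf⟩
          rw [hfix]
          refine closure_minimal ?_ (isClosed_eq (compOp _).continuous continuous_id)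
          refine iUnion_subset fun n => ?_
          rintro _ ⟨g, rfl⟩
          ext x
          simp [hr2 (hSN n)] }
  exact ⟨𝔰, fun N => norm_compOp_le _⟩

end Projectional

/-! ### Continuous images of Corson compacta -/

section CorsonImage

variable {K L Γ : Type u} [TopologicalSpace K]

/-- Countably many pairs from the kernel of `φ` have coordinates in `G` dense among all such
pairs. -/
lemma exists_countable_kernel_pairs {e : K → Γ → ℝ} (he : Continuous e) (φ : K → L)
    (G : Finset Γ) :
    ∃ Q : Set (K × K), Q.Countable ∧ (∀ q ∈ Q, φ q.1 = φ q.2) ∧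
      ∀ p : K × K, φ p.1 = φ p.2 → ∀ ε > 0, ∃ q ∈ Q, ∀ γ ∈ G,
        |e q.1 γ - e p.1 γ| < ε ∧ |e q.2 γ - e p.2 γ| < ε := by
  classical
  let R := {p : K × K // φ p.1 = φ p.2}
  let g₁ : Γ → C(R, ℝ) := fun γ => ⟨fun p => e p.1.1 γ, by fun_prop⟩
  let g₂ : Γ → C(R, ℝ) := fun γ => ⟨fun p => e p.1.2 γ, by fun_prop⟩
  obtain ⟨Q, hQc, hQ⟩ := exists_countable_approx (G.image g₁ ∪ G.image g₂)
  refine ⟨Subtype.val '' Q, hQc.image _, ?_, fun p hp ε hε => ?_⟩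
  · rintro _ ⟨q, -, rfl⟩
    exact q.2
  · obtain ⟨q, hq, hqp⟩ := hQ ⟨p, hp⟩ ε hε
    refine ⟨q.1, ⟨q, hq, rfl⟩, fun γ hγ => ⟨?_, ?_⟩⟩
    · exact hqp (g₁ γ) (Finset.mem_union_left _ (Finset.mem_image_of_mem _ hγ))
    · exact hqp (g₂ γ) (Finset.mem_union_right _ (Finset.mem_image_of_mem _ hγ))

/-- Countably many continuous functions on `L` separate `φ x₁` from `φ x₂` whenever some boxes
around `x₁`, `x₂` depending on the coordinates in `G` have disjoint images under `φ`. -/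
lemma exists_countable_urysohn [CompactSpace K] [TopologicalSpace L] [CompactSpace L]
    [T2Space L] {e : K → Γ → ℝ} (he : Continuous e) {φ : K → L}
    (hφ : Continuous φ) (G : Finset Γ) :
    ∃ 𝒰 : Set C(L, ℝ), 𝒰.Countable ∧ ∀ x₁ x₂ : K, ∀ ε > 0,
      (∀ p : K × K, φ p.1 = φ p.2 → ∃ γ ∈ G, ε ≤ |e p.1 γ - e x₁ γ| ∨ ε ≤ |e p.2 γ - e x₂ γ|) →
      ∃ f ∈ 𝒰, f (φ x₁) ≠ f (φ x₂) := by
  classical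
  let eG : K → (G → ℝ) := fun x γ => e x γ
  have heG : Continuous eG := by fun_prop
  obtain ⟨D, hDc, hD⟩ := exists_countable_dense (G → ℝ)
  have := hDc.to_subtype
  let W : ℕ → (G → ℝ) → Set K := fun n q => {x | dist (eG x) q ≤ 1 / ((n : ℝ) + 1)}
  have hW : ∀ n q, IsClosed (φ '' W n q) := fun n q =>
    ((isClosed_le (by fun_prop) continuous_const).isCompact.image hφ).isClosed
  have hU : ∀ i : ℕ × D × D, ∃ f : C(L, ℝ), Disjoint (φ '' W i.1 i.2.1) (φ '' W i.1 i.2.2) →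
      EqOn f 0 (φ '' W i.1 i.2.1) ∧ EqOn f 1 (φ '' W i.1 i.2.2) := by
    intro i
    by_cases hd : Disjoint (φ '' W i.1 i.2.1) (φ '' W i.1 i.2.2)
    · obtain ⟨f, h0, h1, -⟩ := exists_continuous_zero_one_of_isClosed (hW _ _) (hW _ _) hd
      exact ⟨f, fun _ => ⟨h0, h1⟩⟩
    · exact ⟨0, fun h => absurd h hd⟩
  choose f hf using hU
  refine ⟨range f, countable_range f, fun x₁ x₂ ε hε hx => ?_⟩
  obtain ⟨n, hn⟩ := exists_nat_one_div_lt (half_pos hε)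
  have hpos : 0 < 1 / ((n : ℝ) + 1) := by positivity
  obtain ⟨q₁, hq₁, hd₁⟩ := Metric.mem_closure_iff.1 (hD (eG x₁)) _ hpos
  obtain ⟨q₂, hq₂, hd₂⟩ := Metric.mem_closure_iff.1 (hD (eG x₂)) _ hpos
  have hclose : ∀ (x w : K) (q : G → ℝ), dist (eG x) q < 1 / ((n : ℝ) + 1) → w ∈ W n q →
      ∀ γ ∈ G, |e w γ - e x γ| < ε := by
    intro x w q hxq hw γ hγ
    have h1 : dist (eG w) (eG x) < ε := by
      have := dist_triangle_right (eG w) (eG x) q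
      have hw' : dist (eG w) q ≤ 1 / ((n : ℝ) + 1) := hw
      linarith
    have h2 := (dist_pi_lt_iff hε).1 h1 ⟨γ, hγ⟩
    simpa [eG, Real.dist_eq] using h2
  have hdisj : Disjoint (φ '' W n q₁) (φ '' W n q₂) := by
    rw [Set.disjoint_left]
    rintro _ ⟨w₁, hw₁, rfl⟩ ⟨w₂, hw₂, hw⟩
    obtain ⟨γ, hγ, hcon⟩ := hx (w₁, w₂) hw.symm
    have h1 := hclose x₁ w₁ q₁ hd₁ hw₁ γ hγ
    have h2 := hclose x₂ w₂ q₂ hd₂ hw₂ γ hγ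
    rcases hcon with hcon | hcon
    · exact absurd h1 (not_lt.2 hcon)
    · exact absurd h2 (not_lt.2 hcon)
  obtain ⟨h0, h1⟩ := hf (n, ⟨q₁, hq₁⟩, ⟨q₂, hq₂⟩) hdisj
  refine ⟨_, mem_range_self (n, ⟨q₁, hq₁⟩, ⟨q₂, hq₂⟩), ?_⟩
  have e0 := h0 (mem_image_of_mem φ (show x₁ ∈ W n q₁ from hd₁.le))
  have e1 := h1 (mem_image_of_mem φ (show x₂ ∈ W n q₂ from hd₂.le))
  rw [e0, e1]
  simp

/-- Images of Corson compacta have 1-projectional skeletons. Besides points of `L` and functions on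
`L`, the closing-off involves points of `K` and the coordinates of its embedding. -/
theorem has1ProjectionalSkeleton_of_corson [CompactSpace K] [TopologicalSpace L]
    [CompactSpace L] [T2Space L] (hK : IsCorsonCompact K) {φ : K → L}
    (hφ : Continuous φ) (hsurj : Function.Surjective φ) :
    Has1ProjectionalSkeleton C(L, ℝ) := by
  classical
  obtain ⟨Γ, A, -, hsupp, ⟨em⟩⟩ := hK
  let e : K → Γ → ℝ := fun x => (em x).1
  have he : Continuous e := continuous_subtype_val.comp em.continuous
  have heinj : Function.Injective e := Subtype.val_injective.comp em.injective
  have hsupp : ∀ x, {γ | e x γ ≠ 0}.Countable := fun x => hsupp _ (em x).2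
  choose ψ hψ using hsurj
  choose Q hQc hQR hQ using exists_countable_kernel_pairs he φ
  choose 𝒰 h𝒰c h𝒰 using exists_countable_urysohn he hφ
  let T := K ⊕ Γ
  let E := Obj L T
  let kp : K → E := fun x => Obj.ax (Sum.inl x)
  let gm : Γ → E := fun γ => Obj.ax (Sum.inr γ)
  have hkp : Function.Injective kp :=
    Sum.inr_injective.comp (Sum.inr_injective.comp Sum.inl_injective)
  have hgm : Function.Injective gm :=
    Sum.inr_injective.comp (Sum.inr_injective.comp Sum.inr_injective)
  let gmF : Finset E → Finset Γ := fun F => F.preimage gm hgm.injOn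
  let c : Finset E → Set E := fun F => approxOp L T F ∪
    ((⋃ x ∈ kp ⁻¹' (F : Set E), gm '' {γ | e x γ ≠ 0}) ∪
      ((⋃ y ∈ Obj.pts (F : Set E), {kp (ψ y)}) ∪
        (((fun q : K × K => kp q.1) '' Q (gmF F) ∪ (fun q : K × K => kp q.2) '' Q (gmF F)) ∪
          Obj.fn '' 𝒰 (gmF F))))
  have hc : ∀ F, (c F).Countable := by
    intro F
    refine (countable_approxOp F).union (Countable.union ?_ (Countable.union ?_
      (Countable.union (Countable.union ?_ ?_) ?_)))
    · exact (F.countable_toSet.preimage hkp).biUnion fun x _ => (hsupp x).image _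
    · exact (F.countable_toSet.preimage Sum.inl_injective).biUnion
        fun x _ => countable_singleton _
    · exact (hQc _).image _
    · exact (hQc _).image _
    · exact (h𝒰c _).image _
  refine has1ProjectionalSkeleton_of_goodPair (c := c) hc fun N hNc hN =>
    ⟨exists_eq_of_closedUnder (fun F => subset_union_left) hN, fun y₁ hy₁ y₂ hy₂ hy => ?_⟩
  have hN1 : ∀ x, kp x ∈ N → ∀ γ, gm γ ∉ N → e x γ = 0 := by
    intro x hx γ hγ
    by_contra hne
    have hF : ((({kp x} : Finset E)) : Set E) ⊆ N := by simpa using hx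
    exact hγ (hN _ hF (Or.inr (Or.inl (mem_iUnion₂.2 ⟨x, by simp, γ, hne, rfl⟩))))
  have hN2 : ∀ y, y ∈ Obj.pts N → kp (ψ y) ∈ N := by
    intro y hy
    have hF : ((({Sum.inl y} : Finset E)) : Set E) ⊆ N := by simpa [Obj.pts] using hy
    exact hN _ hF (Or.inr (Or.inr (Or.inl (mem_iUnion₂.2 ⟨y, by simp [Obj.pts], rfl⟩))))
  have hG : ∀ G : Finset Γ, (∀ γ ∈ G, gm γ ∈ N) → c (G.map ⟨gm, hgm⟩) ⊆ N ∧
      gmF (G.map ⟨gm, hgm⟩) = G := by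
    intro G hGN
    refine ⟨hN _ ?_, ?_⟩
    · intro e he
      simp only [Finset.coe_map, Function.Embedding.coeFn_mk, mem_image] at he
      obtain ⟨γ, hγ, rfl⟩ := he
      exact hGN γ hγ
    · ext γ
      simp [gmF]
  have hN3 : ∀ G : Finset Γ, (∀ γ ∈ G, gm γ ∈ N) → ∀ q ∈ Q G, kp q.1 ∈ N ∧ kp q.2 ∈ N := by
    intro G hGN q hq
    obtain ⟨h1, h2⟩ := hG G hGN
    rw [← h2] at hq
    exact ⟨h1 (Or.inr (Or.inr (Or.inr (Or.inl (Or.inl ⟨q, hq, rfl⟩))))),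
      h1 (Or.inr (Or.inr (Or.inr (Or.inl (Or.inr ⟨q, hq, rfl⟩)))))⟩
  have hN4 : ∀ G : Finset Γ, (∀ γ ∈ G, gm γ ∈ N) → ∀ f ∈ 𝒰 G, f ∈ Obj.fns N := by
    intro G hGN f hf
    obtain ⟨h1, h2⟩ := hG G hGN
    rw [← h2] at hf
    exact h1 (Or.inr (Or.inr (Or.inr (Or.inr ⟨f, hf, rfl⟩))))
  let NK : Set K := kp ⁻¹' N
  let Z : Set K := {x | ∀ γ, gm γ ∉ N → e x γ = 0}
  have hZc : IsClosed Z := by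
    have : Z = ⋂ γ, ⋂ _ : gm γ ∉ N, {x | e x γ = 0} := by
      ext x
      simp [Z]
    rw [this]
    exact isClosed_iInter fun γ => isClosed_iInter fun _ =>
      isClosed_eq (by fun_prop) continuous_const
  have hNKZ : closure NK ⊆ Z := closure_minimal hN1 hZc
  have hlift : ∀ y ∈ closure (Obj.pts N), ∃ x ∈ Z, φ x = y := by
    intro y hy
    have h1 : closure (Obj.pts N) ⊆ φ '' closure NK := by
      refine closure_minimal ?_ (isClosed_closure.isCompact.image hφ).isClosed
      intro z hz
      exact ⟨ψ z, subset_closure (hN2 z hz), hψ z⟩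
    obtain ⟨x, hx, rfl⟩ := h1 hy
    exact ⟨x, hNKZ hx, rfl⟩
  obtain ⟨x₁, hx₁, rfl⟩ := hlift y₁ hy₁
  obtain ⟨x₂, hx₂, rfl⟩ := hlift y₂ hy₂
  have happ : ∀ G : Finset Γ, (∀ γ ∈ G, gm γ ∈ N) → ∀ ε > 0, ∃ p : K × K, φ p.1 = φ p.2 ∧
      p.1 ∈ Z ∧ p.2 ∈ Z ∧ ∀ γ ∈ G, |e p.1 γ - e x₁ γ| ≤ ε ∧ |e p.2 γ - e x₂ γ| ≤ ε := by
    intro G hGN ε hε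
    have hex : ∃ p : K × K, φ p.1 = φ p.2 ∧
        ∀ γ ∈ G, |e p.1 γ - e x₁ γ| < ε / 2 ∧ |e p.2 γ - e x₂ γ| < ε / 2 := by
      by_contra hcon
      push Not at hcon
      obtain ⟨f, hf, hne⟩ := h𝒰 G x₁ x₂ (ε / 2) (half_pos hε) (by
        intro p hp
        obtain ⟨γ, hγ, h1⟩ := hcon p hp
        refine ⟨γ, hγ, ?_⟩
        by_contra hh
        push Not at hh
        exact absurd (h1 hh.1) (not_le.2 hh.2))
      exact hne (hy f (hN4 G hGN f hf))
    obtain ⟨p, hp, hpx⟩ := hex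
    obtain ⟨q, hq, hqp⟩ := hQ G p hp (ε / 2) (half_pos hε)
    obtain ⟨k1, k2⟩ := hN3 G hGN q hq
    refine ⟨q, hQR G q hq, hN1 _ k1, hN1 _ k2, fun γ hγ => ⟨?_, ?_⟩⟩
    · have := abs_sub_le (e q.1 γ) (e p.1 γ) (e x₁ γ)
      linarith [(hpx γ hγ).1, (hqp γ hγ).1]
    · have := abs_sub_le (e q.2 γ) (e p.2 γ) (e x₂ γ)
      linarith [(hpx γ hγ).2, (hqp γ hγ).2]
  have hRc : IsClosed {p : K × K | φ p.1 = φ p.2 ∧ p.1 ∈ Z ∧ p.2 ∈ Z} := by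
    refine (isClosed_eq (by fun_prop) (by fun_prop)).inter
      ((hZc.preimage continuous_fst).inter (hZc.preimage continuous_snd))
  have hne : ({p : K × K | φ p.1 = φ p.2 ∧ p.1 ∈ Z ∧ p.2 ∈ Z} ∩
      ⋂ i : {γ // gm γ ∈ N} × ℕ, {p : K × K | |e p.1 i.1 - e x₁ i.1| ≤ 1 / ((i.2 : ℝ) + 1) ∧
        |e p.2 i.1 - e x₂ i.1| ≤ 1 / ((i.2 : ℝ) + 1)}).Nonempty := by
    refine hRc.isCompact.inter_iInter_nonempty _ (fun i => ?_) (fun I => ?_)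
    · have h1 : Continuous fun p : K × K => |e p.1 i.1 - e x₁ i.1| := by fun_prop
      have h2 : Continuous fun p : K × K => |e p.2 i.1 - e x₂ i.1| := by fun_prop
      exact (isClosed_le h1 continuous_const).inter (isClosed_le h2 continuous_const)
    · obtain ⟨ε, hε, hεI⟩ : ∃ ε > (0 : ℝ), ∀ i ∈ I, ε ≤ 1 / ((i.2 : ℝ) + 1) := by
        refine ⟨1 / (((I.sup Prod.snd : ℕ) : ℝ) + 1), by positivity, fun i hi => ?_⟩
        have : (i.2 : ℝ) ≤ ((I.sup Prod.snd : ℕ) : ℝ) := by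
          exact_mod_cast Finset.le_sup (f := Prod.snd) hi
        gcongr
      obtain ⟨p, hp, hp1, hp2, hpx⟩ := happ (I.image fun i => i.1.1) (by
        intro γ hγ
        obtain ⟨i, -, rfl⟩ := Finset.mem_image.1 hγ
        exact i.1.2) ε hε
      refine ⟨p, ⟨hp, hp1, hp2⟩, mem_iInter₂.2 fun i hi => ?_⟩
      have := hpx i.1.1 (Finset.mem_image_of_mem _ hi)
      exact ⟨this.1.trans (hεI i hi), this.2.trans (hεI i hi)⟩
  obtain ⟨p, ⟨hp, hp1, hp2⟩, hpI⟩ := hne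
  have hcoord : ∀ (a b : K), a ∈ Z → b ∈ Z →
      (∀ γ, gm γ ∈ N → ∀ n : ℕ, |e a γ - e b γ| ≤ 1 / ((n : ℝ) + 1)) → a = b := by
    intro a b ha hb hab
    apply heinj
    funext γ
    by_cases hγ : gm γ ∈ N
    · by_contra hne
      obtain ⟨n, hn⟩ := exists_nat_one_div_lt (abs_pos.2 (sub_ne_zero.2 hne))
      exact absurd (hab γ hγ n) (not_le.2 hn)
    · rw [ha γ hγ, hb γ hγ]
  have e1 : p.1 = x₁ := hcoord _ _ hp1 hx₁ fun γ hγ n =>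
    (mem_iInter.1 hpI (⟨γ, hγ⟩, n)).1
  have e2 : p.2 = x₂ := hcoord _ _ hp2 hx₂ fun γ hγ n =>
    (mem_iInter.1 hpI (⟨γ, hγ⟩, n)).2
  rw [← e1, ← e2, hp]

end CorsonImage

/-! ### Retractional skeletons dual to 1-projectional skeletons -/

attribute [instance] ProjectionalSkeleton.po ProjectionalSkeleton.ne

section Dual

variable {X : Type u} [NormedAddCommGroup X] [NormedSpace ℝ X]

lemma isCompact_dualBall : IsCompact (dualBall X) := by
  have h : dualBall X = WeakDual.toStrongDual ⁻¹' Metric.closedBall (0 : StrongDual ℝ X) 1 := by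
    ext φ
    simp only [dualBall, mem_ofPred_eq, mem_preimage, mem_closedBall_zero_iff]
    rw [ContinuousLinearMap.opNorm_le_iff zero_le_one]
    simp
  rw [h]
  exact WeakDual.isCompact_closedBall _ _

/-- The adjoint of `P`, on the weak* dual. -/
noncomputable def adjointMap (P : X →L[ℝ] X) (φ : WeakDual ℝ X) : WeakDual ℝ X :=
  StrongDual.toWeakDual ((WeakDual.toStrongDual φ).comp P)

@[simp] lemma adjointMap_apply (P : X →L[ℝ] X) (φ : WeakDual ℝ X) (x : X) :
    adjointMap P φ x = φ (P x) := rfl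

lemma continuous_adjointMap (P : X →L[ℝ] X) : Continuous (adjointMap P) :=
  WeakDual.continuous_of_continuous_eval fun x => WeakDual.eval_continuous (P x)

lemma adjointMap_mem_dualBall {P : X →L[ℝ] X} (hP : ‖P‖ ≤ 1) {φ : WeakDual ℝ X}
    (hφ : φ ∈ dualBall X) : adjointMap P φ ∈ dualBall X := by
  intro x
  refine (hφ (P x)).trans ?_
  simpa using P.le_of_opNorm_le hP x

lemma weakDual_tendsto_iff {α : Type*} {l : Filter α} {f : α → WeakDual ℝ X} {φ : WeakDual ℝ X} :
    Tendsto f l (𝓝 φ) ↔ ∀ x, Tendsto (fun a => f a x) l (𝓝 (φ x)) :=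
  tendsto_iff_forall_eval_tendsto_topDualPairing

lemma ProjectionalSkeleton.tendsto_of_closure (𝔰 : ProjectionalSkeleton X)
    (h1 : ∀ s, ‖𝔰.P s‖ ≤ 1) {f : ℕ → 𝔰.Γ} (hf : StrictMono f) {t : 𝔰.Γ}
    (ht : IsLUB (range f) t)
    (hcl : range (𝔰.P t) = closure (⋃ n, range (𝔰.P (f n)))) (x : X) :
    Tendsto (fun n => 𝔰.P (f n) x) atTop (𝓝 (𝔰.P t x)) := by
  rw [Metric.tendsto_atTop]
  intro ε hε
  have hx : 𝔰.P t x ∈ closure (⋃ n, range (𝔰.P (f n))) := hcl ▸ mem_range_self x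
  obtain ⟨y, hy, hd⟩ := Metric.mem_closure_iff.1 hx (ε / 2) (half_pos hε)
  obtain ⟨m, z, rfl⟩ := mem_iUnion.1 hy
  refine ⟨m, fun n hn => ?_⟩
  have e1 : 𝔰.P (f n) (𝔰.P t x) = 𝔰.P (f n) x :=
    (𝔰.comp_eq_of_le _ _ (ht.1 (mem_range_self n)) x).1
  have e2 : 𝔰.P (f n) (𝔰.P (f m) z) = 𝔰.P (f m) z :=
    (𝔰.comp_eq_of_le _ _ (hf.monotone hn) z).2
  have e3 : ‖𝔰.P (f n) (𝔰.P t x - 𝔰.P (f m) z)‖ ≤ ‖𝔰.P t x - 𝔰.P (f m) z‖ := by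
    simpa using (𝔰.P (f n)).le_of_opNorm_le (h1 _) (𝔰.P t x - 𝔰.P (f m) z)
  rw [map_sub, e1, e2] at e3
  rw [dist_eq_norm] at hd ⊢
  calc ‖𝔰.P (f n) x - 𝔰.P t x‖
      = ‖(𝔰.P (f n) x - 𝔰.P (f m) z) - (𝔰.P t x - 𝔰.P (f m) z)‖ := by congr 1; abel
    _ ≤ ‖𝔰.P (f n) x - 𝔰.P (f m) z‖ + ‖𝔰.P t x - 𝔰.P (f m) z‖ := norm_sub_le _ _
    _ < ε := by linarith

/-- The adjoints of a 1-projectional skeleton form a retractional skeleton on every compact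
subset of the dual which they eventually preserve. -/
theorem hasRetractionalSkeleton_of_projectional (𝔰 : ProjectionalSkeleton X)
    (h1 : ∀ s, ‖𝔰.P s‖ ≤ 1) {S : Set (WeakDual ℝ X)} (hS : IsCompact S) (s₀ : 𝔰.Γ)
    (hpres : ∀ s, s₀ ≤ s → ∀ φ ∈ S, adjointMap (𝔰.P s) φ ∈ S) : HasRetractionalSkeleton S := by
  have hcs : CompactSpace S := isCompact_iff_compactSpace.1 hS
  have hfix : ∀ {s t : 𝔰.Γ} {x : X}, s ≤ t → 𝔰.P s x = x → 𝔰.P t x = x := by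
    intro s t x hst hx
    have := (𝔰.comp_eq_of_le s t hst x).2
    rwa [hx] at this
  refine ⟨{
    Γ := {s : 𝔰.Γ // s₀ ≤ s}
    po := inferInstance
    ne := ⟨⟨s₀, le_rfl⟩⟩
    directed := ?_
    r := fun s => ⟨fun φ => ⟨adjointMap (𝔰.P s.1) φ.1, hpres s.1 s.2 φ.1 φ.2⟩,
      ((continuous_adjointMap _).comp continuous_subtype_val).subtype_mk _⟩
    isRetraction := ?_
    metrizable := ?_
    tendsto_id := ?_
    comp_eq_of_le := ?_
    sup_seq := ?_ }⟩
  · rintro ⟨s, hs⟩ ⟨t, ht⟩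
    obtain ⟨w, hw₁, hw₂⟩ := 𝔰.directed s t
    exact ⟨⟨w, hs.trans hw₁⟩, hw₁, hw₂⟩
  · intro s φ
    apply Subtype.ext
    apply DFunLike.ext
    intro x
    simp [𝔰.idem]
  · intro s
    obtain ⟨D, hDs, hDc, hDd⟩ := (𝔰.separable s.1).exists_countable_dense_subset
    have := hDc.to_subtype
    set r : C(S, S) := ⟨fun φ => ⟨adjointMap (𝔰.P s.1) φ.1, hpres s.1 s.2 φ.1 φ.2⟩,
      ((continuous_adjointMap _).comp continuous_subtype_val).subtype_mk _⟩ with hr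
    have hcr : CompactSpace (range r) :=
      isCompact_iff_compactSpace.1 (isCompact_range r.continuous)
    let g : range r → (D → ℝ) := fun φ d => φ.1.1 d.1
    have hg : Continuous g := by
      refine continuous_pi fun d => ?_
      exact (WeakDual.eval_continuous d.1).comp (continuous_subtype_val.comp continuous_subtype_val)
    have hinj : Function.Injective g := by
      rintro ⟨_, φ, rfl⟩ ⟨_, ψ, rfl⟩ hφψ
      apply Subtype.ext
      apply Subtype.ext
      apply DFunLike.ext
      intro x
      have hclosed : IsClosed {y | adjointMap (𝔰.P s.1) φ.1 y = adjointMap (𝔰.P s.1) ψ.1 y} :=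
        isClosed_eq (WeakDual.toStrongDual (adjointMap (𝔰.P s.1) φ.1)).continuous
          (WeakDual.toStrongDual (adjointMap (𝔰.P s.1) ψ.1)).continuous
      have := closure_minimal (fun d hd => congrFun hφψ ⟨d, hd⟩) hclosed
        (hDd (mem_range_self x))
      simp only [mem_ofPred_eq, adjointMap_apply, 𝔰.idem] at this
      simpa [hr] using this
    exact (hg.isClosedEmbedding hinj).isEmbedding.metrizableSpace
  · intro φ
    rw [tendsto_subtype_rng, weakDual_tendsto_iff]
    intro x
    obtain ⟨s, y, rfl⟩ := 𝔰.covers x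
    obtain ⟨w, hw₁, hw₂⟩ := 𝔰.directed s₀ s
    refine tendsto_const_nhds.congr' ?_
    filter_upwards [eventually_ge_atTop (⟨w, hw₁⟩ : {s : 𝔰.Γ // s₀ ≤ s})] with t ht
    have : 𝔰.P t.1 (𝔰.P s y) = 𝔰.P s y := hfix (hw₂.trans ht) (𝔰.idem s y)
    simp [this]
  · intro s t hst φ
    constructor
    · apply Subtype.ext
      apply DFunLike.ext
      intro x
      simp [(𝔰.comp_eq_of_le s.1 t.1 hst x).2]
    · apply Subtype.ext
      apply DFunLike.ext
      intro x
      simp [(𝔰.comp_eq_of_le s.1 t.1 hst x).1]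
  · intro f hf
    have hf' : StrictMono fun n => (f n).1 := fun m n hmn => hf hmn
    obtain ⟨t, ht, hcl⟩ := 𝔰.sup_seq _ hf'
    refine ⟨⟨t, (f 0).2.trans (ht.1 ⟨0, rfl⟩)⟩, ⟨?_, ?_⟩, fun φ => ?_⟩
    · rintro _ ⟨n, rfl⟩
      exact ht.1 ⟨n, rfl⟩
    · intro w hw
      refine ht.2 ?_
      rintro _ ⟨n, rfl⟩
      exact hw ⟨n, rfl⟩
    · rw [tendsto_subtype_rng, weakDual_tendsto_iff]
      intro x
      exact ((WeakDual.toStrongDual φ.1).continuous.tendsto _).comp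
        (𝔰.tendsto_of_closure h1 hf' ht hcl x)

theorem hasRetractionalSkeleton_dualBall (h : Has1ProjectionalSkeleton X) :
    HasRetractionalSkeleton (dualBall X) := by
  obtain ⟨𝔰, h1⟩ := h
  exact hasRetractionalSkeleton_of_projectional 𝔰 h1 isCompact_dualBall (Classical.arbitrary _)
    fun s _ φ hφ => adjointMap_mem_dualBall (h1 s) hφ

end Dual

section ProbMeasures

variable {L : Type u} [TopologicalSpace L] [CompactSpace L]

lemma mem_probMeasuresSet_of_mem_dualBall {φ : WeakDual ℝ C(L, ℝ)}
    (hφ : φ ∈ dualBall C(L, ℝ)) (h1 : φ 1 = 1) : φ ∈ probMeasuresSet L := by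
  refine ⟨h1, fun f hf => ?_⟩
  have h2 : ‖‖f‖ • (1 : C(L, ℝ)) - f‖ ≤ ‖f‖ := by
    rw [ContinuousMap.norm_le _ (norm_nonneg f)]
    intro x
    have h3 := (le_abs_self _).trans (f.norm_coe_le_norm x)
    simp only [ContinuousMap.coe_sub, ContinuousMap.coe_smul, ContinuousMap.coe_one,
      Pi.sub_apply, Pi.smul_apply, Pi.one_apply, smul_eq_mul, mul_one, Real.norm_eq_abs]
    rw [abs_le]
    exact ⟨by linarith [hf x], by linarith [hf x]⟩
  have h4 := (le_abs_self _).trans ((hφ _).trans h2)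
  rw [map_sub, map_smul, h1, smul_eq_mul, mul_one] at h4
  linarith

lemma probMeasuresSet_subset_dualBall : probMeasuresSet L ⊆ dualBall C(L, ℝ) := by
  rintro φ ⟨h1, hpos⟩ f
  have hle : ∀ x, |f x| ≤ ‖f‖ := fun x => f.norm_coe_le_norm x
  have h2 : 0 ≤ φ (‖f‖ • (1 : C(L, ℝ)) - f) := hpos _ fun x => by
    simp only [ContinuousMap.coe_sub, ContinuousMap.coe_smul, ContinuousMap.coe_one,
      Pi.sub_apply, Pi.smul_apply, Pi.one_apply, smul_eq_mul, mul_one]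
    linarith [(abs_le.1 (hle x)).2]
  have h3 : 0 ≤ φ (‖f‖ • (1 : C(L, ℝ)) + f) := hpos _ fun x => by
    simp only [ContinuousMap.coe_add, ContinuousMap.coe_smul, ContinuousMap.coe_one,
      Pi.add_apply, Pi.smul_apply, Pi.one_apply, smul_eq_mul, mul_one]
    linarith [(abs_le.1 (hle x)).1]
  rw [map_sub, map_smul, h1, smul_eq_mul, mul_one] at h2
  rw [map_add, map_smul, h1, smul_eq_mul, mul_one] at h3
  rw [abs_le]
  exact ⟨by linarith, by linarith⟩

lemma isCompact_probMeasuresSet : IsCompact (probMeasuresSet L) := by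
  refine isCompact_dualBall.of_isClosed_subset ?_ probMeasuresSet_subset_dualBall
  have : probMeasuresSet L = {φ | φ 1 = 1} ∩ ⋂ f : C(L, ℝ), ⋂ _ : ∀ x, 0 ≤ f x, {φ | 0 ≤ φ f} := by
    ext φ
    simp [probMeasuresSet]
  rw [this]
  exact (isClosed_eq (WeakDual.eval_continuous _) continuous_const).inter
    (isClosed_iInter fun f => isClosed_iInter fun _ =>
      isClosed_le continuous_const (WeakDual.eval_continuous f))

theorem hasRetractionalSkeleton_probMeasuresSet (h : Has1ProjectionalSkeleton C(L, ℝ)) :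
    HasRetractionalSkeleton (probMeasuresSet L) := by
  obtain ⟨𝔰, h1⟩ := h
  obtain ⟨s₀, g, hg⟩ := 𝔰.covers 1
  refine hasRetractionalSkeleton_of_projectional 𝔰 h1 isCompact_probMeasuresSet s₀
    fun s hs φ hφ => mem_probMeasuresSet_of_mem_dualBall
      (adjointMap_mem_dualBall (h1 s) (probMeasuresSet_subset_dualBall hφ)) ?_
  have := (𝔰.comp_eq_of_le s₀ s hs g).2
  rw [hg] at this
  rw [adjointMap_apply, this]
  exact hφ.1

end ProbMeasures

/-! ### Point evaluations in the induced set -/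

/-- Evaluation at `x`, as an element of the weak* dual of `C(L, ℝ)`. -/
noncomputable def dirac {L : Type u} [TopologicalSpace L] [CompactSpace L] (x : L) :
    WeakDual ℝ C(L, ℝ) :=
  StrongDual.toWeakDual (ContinuousMap.evalCLM ℝ x)

/-- A retractional skeleton on some weak* compact set between the set of point evaluations and the
dual unit ball. Both `(B_{C(L)*}, w*)` and `P(L)` are such sets. -/
structure DualSkeleton (L : Type u) [TopologicalSpace L] [CompactSpace L] : Type (u + 1) where
  S : Set (WeakDual ℝ C(L, ℝ))
  isCompact : IsCompact S
  subset : S ⊆ dualBall C(L, ℝ)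
  dirac_mem : ∀ x, dirac x ∈ S
  skel : RetractionalSkeleton S

section Dirac

variable {L : Type u} [TopologicalSpace L] [CompactSpace L]

@[simp] lemma dirac_apply (x : L) (f : C(L, ℝ)) : dirac x f = f x := rfl

lemma dirac_mem_probMeasuresSet (x : L) : dirac x ∈ probMeasuresSet L := by
  refine ⟨?_, fun f hf => ?_⟩
  · simp
  · simpa using hf x

lemma continuous_dirac : Continuous (dirac : L → WeakDual ℝ C(L, ℝ)) :=
  WeakDual.continuous_of_continuous_eval fun f => f.continuous

lemma dirac_injective [T2Space L] : Function.Injective (dirac : L → WeakDual ℝ C(L, ℝ)) := by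
  intro x y hxy
  by_contra hne
  obtain ⟨f, h0, h1, -⟩ := exists_continuous_zero_one_of_isClosed (isClosed_singleton (x := x))
    (isClosed_singleton (x := y)) (by simpa using hne)
  have e := DFunLike.congr_fun hxy f
  simp only [dirac_apply] at e
  rw [h0 rfl, h1 rfl] at e
  simp at e

/-- A probability measure annihilating nonnegative functions whose only common zero is `x` is the
point evaluation at `x`. -/
lemma eq_dirac_of_concentrated {μ : WeakDual ℝ C(L, ℝ)} (hμ : μ ∈ probMeasuresSet L) {x : L}
    (h : ∀ y, y ≠ x → ∃ f : C(L, ℝ), (∀ z, 0 ≤ f z) ∧ μ f = 0 ∧ 0 < f y) : μ = dirac x := by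
  obtain ⟨h1, hpos⟩ := hμ
  have key : ∀ g : C(L, ℝ), ∀ ε > 0, μ g ≤ g x + ε := by
    intro g ε hε
    set C := {y | g x + ε ≤ g y} with hC
    have hCc : IsCompact C := (isClosed_le continuous_const g.continuous).isCompact
    have hex : ∀ y : C, ∃ f : C(L, ℝ), (∀ z, 0 ≤ f z) ∧ μ f = 0 ∧ 0 < f y := by
      intro y
      refine h y fun hyx => ?_
      have hy : g x + ε ≤ g y := y.2
      rw [hyx] at hy
      linarith
    choose f hf0 hfμ hfy using hex
    obtain ⟨I, hI⟩ := hCc.elim_finite_subcover (fun y : C => {z | 0 < f y z})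
      (fun y => isOpen_lt continuous_const (f y).continuous)
      fun y hy => mem_iUnion.2 ⟨⟨y, hy⟩, hfy ⟨y, hy⟩⟩
    let F : C(L, ℝ) := ∑ y ∈ I, f y
    have hFapp : ∀ z, F z = ∑ y ∈ I, f y z := fun z => by simp [F]
    have hF0 : ∀ z, 0 ≤ F z := fun z => by
      rw [hFapp]
      exact Finset.sum_nonneg fun y _ => hf0 y z
    have hFμ : μ F = 0 := by
      simp only [F, map_sum]
      exact Finset.sum_eq_zero fun y _ => hfμ y
    have hFC : ∀ z ∈ C, 0 < F z := by
      intro z hz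
      obtain ⟨y, hyI, hy⟩ := mem_iUnion₂.1 (hI hz)
      rw [hFapp]
      exact Finset.sum_pos' (fun y _ => hf0 y z) ⟨y, hyI, hy⟩
    obtain ⟨m, hm, hmC⟩ : ∃ m > 0, ∀ z ∈ C, m ≤ F z := by
      rcases C.eq_empty_or_nonempty with he | hne
      · exact ⟨1, one_pos, by simp [he]⟩
      · obtain ⟨z, hz, hmin⟩ := hCc.exists_isMinOn hne F.continuous.continuousOn
        exact ⟨F z, hFC z hz, fun w hw => hmin hw⟩
    have h2 : 0 ≤ μ ((g x + ε) • (1 : C(L, ℝ)) + (2 * ‖g‖ / m) • F - g) := by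
      refine hpos _ fun z => ?_
      simp only [ContinuousMap.coe_sub, ContinuousMap.coe_add, ContinuousMap.coe_smul,
        ContinuousMap.coe_one, Pi.sub_apply, Pi.add_apply, Pi.smul_apply, Pi.one_apply,
        smul_eq_mul, mul_one]
      by_cases hz : z ∈ C
      · have hk : 2 * ‖g‖ ≤ 2 * ‖g‖ / m * F z := by
          rw [div_mul_eq_mul_div, le_div_iff₀ hm]
          exact mul_le_mul_of_nonneg_left (hmC z hz) (by positivity)
        have a1 := (abs_le.1 (g.norm_coe_le_norm z)).2
        have a2 := (abs_le.1 (g.norm_coe_le_norm x)).1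
        linarith
      · have hz' : g z < g x + ε := not_le.1 hz
        have : 0 ≤ 2 * ‖g‖ / m * F z := mul_nonneg (by positivity) (hF0 z)
        linarith
    rw [map_sub, map_add, map_smul, map_smul, hFμ, h1] at h2
    simp only [smul_eq_mul, mul_one, mul_zero, add_zero] at h2
    linarith
  apply DFunLike.ext
  intro g
  rw [dirac_apply]
  apply le_antisymm
  · exact le_of_forall_pos_le_add fun ε hε => key g ε hε
  · refine le_of_forall_pos_le_add fun ε hε => ?_
    have := key (-g) ε hε
    rw [map_neg, ContinuousMap.neg_apply] at this
    linarith

end Dirac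

namespace DualSkeleton

variable {L : Type u} [TopologicalSpace L] [CompactSpace L] (D : DualSkeleton L)

instance : CompactSpace D.S := isCompact_iff_compactSpace.1 D.isCompact

/-- Evaluation at `x`, as a point of the space carrying the skeleton. -/
noncomputable def pt (x : L) : D.S := ⟨dirac x, D.dirac_mem x⟩

@[simp] lemma pt_apply (x : L) (f : C(L, ℝ)) : (D.pt x).1 f = f x := rfl

lemma continuous_pt : Continuous D.pt := continuous_dirac.subtype_mk _

lemma pt_injective [T2Space L] : Function.Injective D.pt := fun _ _ h =>
  dirac_injective (congrArg Subtype.val h)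

/-- The points of `L` whose evaluation functional lies in the induced set. -/
def good : Set L := {x | D.pt x ∈ D.skel.inducedSet}

lemma continuous_eval (f : C(L, ℝ)) : Continuous fun μ : D.S => μ.1 f :=
  (WeakDual.eval_continuous f).comp continuous_subtype_val

lemma mem_good_of_countable {A : Set L} (hA : A.Countable) (hAD : A ⊆ D.good) {x : L}
    (hx : x ∈ closure A) : x ∈ D.good := by
  refine D.skel.mem_inducedSet_of_mem_closure (hA.image D.pt) ?_
    (image_closure_subset_closure_image D.continuous_pt (mem_image_of_mem _ hx))
  rintro _ ⟨a, ha, rfl⟩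
  exact hAD ha

lemma exists_countable_mem_closure [T2Space L] {A : Set L} (hAD : A ⊆ D.good) {x : L}
    (hxD : x ∈ D.good) (hx : x ∈ closure A) : ∃ A' ⊆ A, A'.Countable ∧ x ∈ closure A' := by
  obtain ⟨B, hBA, hBc, hxB⟩ := D.skel.exists_countable_mem_closure (A := D.pt '' A)
    (by rintro _ ⟨a, ha, rfl⟩; exact hAD ha) hxD
    (image_closure_subset_closure_image D.continuous_pt (mem_image_of_mem _ hx))
  obtain ⟨A', hA', rfl⟩ := subset_image_iff.1 hBA
  refine ⟨A', hA', countable_of_injective_of_countable_image D.pt_injective.injOn hBc, ?_⟩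
  rwa [(D.continuous_pt.isClosedEmbedding
    D.pt_injective).isEmbedding.closure_eq_preimage_closure_image]

/-- Gδ points are good: the evaluation at `x` is determined among the elements of `S` by countably
many functions, hence is fixed by some retraction. -/
lemma mem_good_of_isGδ [T2Space L] {x : L} (hx : IsGδ {x}) : x ∈ D.good := by
  obtain ⟨U, hU, hUx⟩ := isGδ_iff_eq_iInter_nat.1 hx
  have hxU : ∀ n, x ∈ U n := fun n => mem_iInter.1 (hUx ▸ mem_singleton x) n
  have hex : ∀ n, ∃ f : C(L, ℝ), f x = 0 ∧ EqOn f 1 (U n)ᶜ ∧ ∀ z, 0 ≤ f z := by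
    intro n
    obtain ⟨f, h0, h1, h01⟩ := exists_continuous_zero_one_of_isClosed
      (isClosed_singleton (x := x)) (hU n).isClosed_compl
      (by simpa using hxU n)
    exact ⟨f, h0 rfl, h1, fun z => (h01 z).1⟩
  choose f hfx hf1 hf0 using hex
  have hF : Continuous fun μ : D.S => ((μ.1 1 : ℝ), fun n => μ.1 (f n)) :=
    (D.continuous_eval 1).prodMk (continuous_pi fun n => D.continuous_eval (f n))
  obtain ⟨t, -, ht⟩ := D.skel.exists_mem_fibre hF (D.pt x) univ_mem
  refine D.skel.mem_inducedSet_iff.2 ⟨t, Subtype.ext ?_⟩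
  have h1 : (D.skel.r t (D.pt x)).1 1 = 1 := by simpa using congrArg Prod.fst ht
  have h2 : ∀ n, (D.skel.r t (D.pt x)).1 (f n) = 0 := fun n => by
    have := congrFun (congrArg Prod.snd ht) n
    simpa [hfx] using this
  refine eq_dirac_of_concentrated
    (mem_probMeasuresSet_of_mem_dualBall (D.subset (Subtype.prop _)) h1) fun y hy => ?_
  have hyU : y ∉ ⋂ n, U n := by
    rw [← hUx]
    exact hy
  obtain ⟨n, hn⟩ := not_forall.1 (mt mem_iInter.2 hyU)
  refine ⟨f n, hf0 n, h2 n, ?_⟩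
  rw [hf1 n hn]
  simp

/-- The elements of `S` of total mass one that live on `closure V`. Being in the dual unit ball,
they are probability measures. -/
def massOn (V : Set L) : Set D.S :=
  {μ | μ.1 1 = 1 ∧ ∀ g : C(L, ℝ), EqOn g 0 (closure V) → μ.1 g = 0}

lemma isClosed_massOn (V : Set L) : IsClosed (D.massOn V) := by
  have : D.massOn V = {μ | μ.1 1 = 1} ∩
      ⋂ g : C(L, ℝ), ⋂ _ : EqOn g 0 (closure V), {μ | μ.1 g = 0} := by
    ext μ
    simp [massOn]
  rw [this]
  exact (isClosed_eq (D.continuous_eval 1) continuous_const).inter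
    (isClosed_iInter fun g => isClosed_iInter fun _ =>
      isClosed_eq (D.continuous_eval g) continuous_const)

lemma pt_mem_closure_massOn [T2Space L] {V : Set L} (hV : IsOpen V) {c : L}
    (hc : c ∈ closure V) : D.pt c ∈ closure (D.massOn V ∩ D.skel.inducedSet) := by
  rw [mem_closure_iff]
  intro O hO hcO
  obtain ⟨x, hxO, hxV⟩ := mem_closure_iff.1 hc _ (hO.preimage D.continuous_pt) hcO
  obtain ⟨f, h0, h1, h01⟩ := exists_continuous_zero_one_of_isClosed
      (isClosed_singleton (x := x)) hV.isClosed_compl (by simpa using hxV)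
  have hF : Continuous fun μ : D.S => ((μ.1 1 : ℝ), (μ.1 f : ℝ)) :=
    (D.continuous_eval 1).prodMk (D.continuous_eval f)
  obtain ⟨t, htO, ht⟩ := D.skel.exists_mem_fibre hF (D.pt x) (hO.mem_nhds hxO)
  have e1 : (D.skel.r t (D.pt x)).1 1 = 1 := by simpa using congrArg Prod.fst ht
  have e2 : (D.skel.r t (D.pt x)).1 f = 0 := by
    have h2 := congrArg Prod.snd ht
    simp only [pt_apply] at h2
    rw [h2, h0 rfl]
    rfl
  obtain ⟨-, hpos⟩ := mem_probMeasuresSet_of_mem_dualBall (D.subset (Subtype.prop _)) e1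
  refine ⟨_, htO, ⟨e1, fun g hg => ?_⟩, D.skel.mem_inducedSet_iff.2 ⟨t, D.skel.isRetraction t _⟩⟩
  -- a function vanishing on `closure V` is dominated by a multiple of `f`
  have hdom : ∀ z, |g z| ≤ ‖g‖ * f z := by
    intro z
    by_cases hz : z ∈ V
    · have h3 : g z = 0 := hg (subset_closure hz)
      rw [h3, abs_zero]
      exact mul_nonneg (norm_nonneg _) (h01 z).1
    · have h3 : f z = 1 := h1 hz
      rw [h3, mul_one]
      exact g.norm_coe_le_norm z
  have a1 := hpos (‖g‖ • f - g) fun z => by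
    have := (abs_le.1 (hdom z)).2
    simp only [ContinuousMap.coe_sub, ContinuousMap.coe_smul, Pi.sub_apply, Pi.smul_apply,
      smul_eq_mul]
    linarith
  have a2 := hpos (‖g‖ • f + g) fun z => by
    have := (abs_le.1 (hdom z)).1
    simp only [ContinuousMap.coe_add, ContinuousMap.coe_smul, Pi.add_apply, Pi.smul_apply,
      smul_eq_mul]
    linarith
  rw [map_sub, map_smul, e2, smul_zero] at a1
  rw [map_add, map_smul, e2, smul_zero] at a2
  linarith

/-- A point `c` at which two open sets with otherwise disjoint closures meet is good: some
retraction maps the evaluation at `c` to a probability measure carried by both closures, hence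
by `c`. -/
lemma mem_good_of_two_sided [T2Space L] {V W : Set L} (hV : IsOpen V) (hW : IsOpen W) {c : L}
    (hcV : c ∈ closure V) (hcW : c ∈ closure W) (hVW : closure V ∩ closure W ⊆ {c}) :
    c ∈ D.good := by
  obtain ⟨t, -, A, hA, B, hB, -, -, htA, htB⟩ := D.skel.exists_mem_closure_inter
    inter_subset_right inter_subset_right (D.pt_mem_closure_massOn hV hcV)
    (D.pt_mem_closure_massOn hW hcW) (Classical.arbitrary _)
  have hmV : D.skel.r t (D.pt c) ∈ D.massOn V :=
    closure_minimal (hA.trans inter_subset_left) (D.isClosed_massOn V) htA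
  have hmW : D.skel.r t (D.pt c) ∈ D.massOn W :=
    closure_minimal (hB.trans inter_subset_left) (D.isClosed_massOn W) htB
  refine D.skel.mem_inducedSet_iff.2 ⟨t, Subtype.ext ?_⟩
  refine eq_dirac_of_concentrated
    (mem_probMeasuresSet_of_mem_dualBall (D.subset (Subtype.prop _)) hmV.1) fun y hy => ?_
  have hsep : ∀ U : Set L, y ∉ closure U → ∃ f : C(L, ℝ), EqOn f 0 (closure U) ∧
      (∀ z, 0 ≤ f z) ∧ 0 < f y := by
    intro U hyU
    obtain ⟨f, h0, h1, h01⟩ := exists_continuous_zero_one_of_isClosed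
      (isClosed_closure (s := U)) (isClosed_singleton (x := y)) (by simpa using hyU)
    refine ⟨f, h0, fun z => (h01 z).1, ?_⟩
    rw [h1 rfl]
    simp
  by_cases hyV : y ∈ closure V
  · have hyW : y ∉ closure W := fun hyW => hy (hVW ⟨hyV, hyW⟩)
    obtain ⟨f, hf, hf0, hfy⟩ := hsep W hyW
    exact ⟨f, hf0, hmW.2 f hf, hfy⟩
  · obtain ⟨f, hf, hf0, hfy⟩ := hsep V hyV
    exact ⟨f, hf0, hmV.2 f hf, hfy⟩

/-- If every point is good then the space is Corson. -/
lemma isCorsonCompact [T2Space L] (h : ∀ x, x ∈ D.good) : IsCorsonCompact L :=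
  isCorsonCompact_of_full D.skel D.continuous_pt D.pt_injective h

end DualSkeleton

section

variable {L : Type u} [TopologicalSpace L] [CompactSpace L]

lemma nonempty_dualSkeleton_of_dualBall (h : HasRetractionalSkeleton (dualBall C(L, ℝ))) :
    Nonempty (DualSkeleton L) := by
  obtain ⟨𝔰⟩ := h
  exact ⟨⟨_, isCompact_dualBall, Subset.rfl,
    fun x => probMeasuresSet_subset_dualBall (dirac_mem_probMeasuresSet x), 𝔰⟩⟩

lemma nonempty_dualSkeleton_of_probMeasuresSet
    (h : HasRetractionalSkeleton (probMeasuresSet L)) : Nonempty (DualSkeleton L) := by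
  obtain ⟨𝔰⟩ := h
  exact ⟨⟨_, isCompact_probMeasuresSet, probMeasuresSet_subset_dualBall,
    dirac_mem_probMeasuresSet, 𝔰⟩⟩

end

/-! ### Gluing points of a compact space -/

section Gluing

/-- The quotient map by a closed equivalence relation on a compact space is closed. -/
lemma isClosedMap_quotientMk {K : Type u} [TopologicalSpace K] [CompactSpace K] [T2Space K]
    (s : Setoid K) (hs : IsClosed {p : K × K | s p.1 p.2}) :
    IsClosedMap (Quotient.mk s) := by
  intro F hF
  rw [← (isQuotientMap_quotient_mk' (s := s)).isClosed_preimage]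
  have h1 : (Quotient.mk s) ⁻¹' (Quotient.mk s '' F)
      = Prod.snd '' ({p : K × K | s p.1 p.2} ∩ Prod.fst ⁻¹' F) := by
    ext y
    constructor
    · rintro ⟨x, hx, hxy⟩
      exact ⟨(x, y), And.intro (Quotient.exact hxy) hx, rfl⟩
    · rintro ⟨⟨x, y'⟩, ⟨hxy, hx⟩, rfl⟩
      exact ⟨x, hx, Quotient.sound hxy⟩
  have h2 : IsClosed (Prod.snd '' ({p : K × K | s p.1 p.2} ∩ Prod.fst ⁻¹' F)) :=
    ((hs.inter (hF.preimage continuous_fst)).isCompact.image continuous_snd).isClosed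
  rw [← h1] at h2
  exact h2

/-- The quotient of a compact Hausdorff space by a closed equivalence relation is Hausdorff. -/
lemma t2Space_quotient {K : Type u} [TopologicalSpace K] [CompactSpace K] [T2Space K]
    (s : Setoid K) (hs : IsClosed {p : K × K | s p.1 p.2}) : T2Space (Quotient s) := by
  have hcl := isClosedMap_quotientMk s hs
  have hc : Continuous (Quotient.mk s) := continuous_quotient_mk'
  refine ⟨fun a b hab => ?_⟩
  have key : ∀ a : Quotient s, IsClosed ((Quotient.mk s) ⁻¹' {a}) := by
    intro a
    obtain ⟨x, rfl⟩ := Quotient.exists_rep a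
    have : IsClosed ({Quotient.mk s x} : Set (Quotient s)) := by
      simpa using hcl {x} isClosed_singleton
    exact this.preimage hc
  have hdisj : Disjoint ((Quotient.mk s) ⁻¹' {a}) ((Quotient.mk s) ⁻¹' {b}) :=
    Disjoint.preimage _ (by simpa using hab)
  obtain ⟨U, V, hU, hV, haU, hbV, hUV⟩ := normal_separation (key a) (key b) hdisj
  refine ⟨(Quotient.mk s '' Uᶜ)ᶜ, (Quotient.mk s '' Vᶜ)ᶜ, (hcl _ hU.isClosed_compl).isOpen_compl,
    (hcl _ hV.isClosed_compl).isOpen_compl, ?_, ?_, ?_⟩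
  · rintro ⟨x, hx, hxa⟩
    exact hx (haU hxa)
  · rintro ⟨x, hx, hxb⟩
    exact hx (hbV hxb)
  · rw [Set.disjoint_left]
    intro c hcU hcV
    obtain ⟨x, rfl⟩ := Quotient.exists_rep c
    have hxU : x ∈ U := by
      by_contra h
      exact hcU ⟨x, h, rfl⟩
    have hxV : x ∈ V := by
      by_contra h
      exact hcV ⟨x, h, rfl⟩
    exact Set.disjoint_left.1 hUV hxU hxV

variable {K : Type u} {T : Type v} {Y : Type*}

/-- The equivalence relation on `K` that identifies `h β` with `h β'` whenever `q β = q β'`. -/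
def glue (h : T → K) (hinj : Function.Injective h) (q : T → Y) : Setoid K where
  r x y := x = y ∨ ∃ β β', h β = x ∧ h β' = y ∧ q β = q β'
  iseqv :=
    { refl := fun _ => Or.inl rfl
      symm := by
        rintro x y (rfl | ⟨β, β', h1, h2, h3⟩)
        · exact Or.inl rfl
        · exact Or.inr ⟨β', β, h2, h1, h3.symm⟩
      trans := by
        rintro x y z (rfl | ⟨β, β', h1, h2, h3⟩) h4
        · exact h4
        · rcases h4 with rfl | ⟨γ, γ', h5, h6, h7⟩
          · exact Or.inr ⟨β, β', h1, h2, h3⟩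
          · have : β' = γ := hinj (h2.trans h5.symm)
            subst this
            exact Or.inr ⟨β, γ', h1, h6, h3.trans h7⟩ }

variable {h : T → K} {hinj : Function.Injective h} {q : T → Y}

lemma glue_mk_eq_iff {x y : K} : Quotient.mk (glue h hinj q) x = Quotient.mk (glue h hinj q) y ↔
    x = y ∨ ∃ β β', h β = x ∧ h β' = y ∧ q β = q β' :=
  Quotient.eq

variable [TopologicalSpace K] [TopologicalSpace T] [TopologicalSpace Y]

lemma isClosed_glue [T2Space K] [CompactSpace T] [T2Space Y] (hh : Continuous h)
    (hq : Continuous q) : IsClosed {p : K × K | glue h hinj q p.1 p.2} := by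
  have h1 : {p : K × K | glue h hinj q p.1 p.2}
      = {p : K × K | p.1 = p.2} ∪ (Prod.map h h) '' {p : T × T | q p.1 = q p.2} := by
    ext ⟨x, y⟩
    constructor
    · rintro (hxy | ⟨β, β', h1, h2, h3⟩)
      · exact Or.inl hxy
      · exact Or.inr ⟨(β, β'), h3, by simp [h1, h2]⟩
    · rintro (hxy | ⟨⟨β, β'⟩, h3, h4⟩)
      · exact Or.inl hxy
      · simp only [Prod.map_apply, Prod.mk.injEq] at h4
        exact Or.inr ⟨β, β', h4.1, h4.2, h3⟩
  rw [h1]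
  refine (isClosed_eq continuous_fst continuous_snd).union ?_
  exact ((isClosed_eq (hq.comp continuous_fst) (hq.comp continuous_snd)).isCompact.image
    (hh.prodMap hh)).isClosed

/-- If two distinct points of a nowhere dense compact set are glued and one of them is isolated in
that set, then the resulting point is approached from two sides, hence good. -/
lemma DualSkeleton.mem_good_of_glue [CompactSpace K] [T2Space K] [CompactSpace T] [T2Space Y]
    (hh : IsEmbedding h) (hq : Continuous q) [T2Space (Quotient (glue h hinj q))]
    (D : DualSkeleton (Quotient (glue h hinj q))) (hempty : interior (range h) = ∅)
    {β₀ β₁ : T} (hne : β₀ ≠ β₁) (hβ : q β₀ = q β₁) (hiso : IsOpen {β₁}) :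
    Quotient.mk (glue h hinj q) (h β₁) ∈ D.good := by
  set p := Quotient.mk (glue h hinj q) with hp
  have hpc : Continuous p := continuous_quotient_mk'
  have hpcl : IsClosedMap p := isClosedMap_quotientMk _ (isClosed_glue hh.continuous hq)
  have hC : IsClosed (range h) := (isCompact_range hh.continuous).isClosed
  have hdense : Dense (range h)ᶜ := interior_eq_empty_iff_dense_compl.1 hempty
  obtain ⟨O, hO, hO1⟩ := hh.isOpen_iff.1 hiso
  have hβ₁O : h β₁ ∈ O := by
    have : β₁ ∈ h ⁻¹' O := by rw [hO1]; rfl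
    exact this
  have hOC : ∀ β, h β ∈ O → β = β₁ := by
    intro β hβO
    have : β ∈ h ⁻¹' O := hβO
    rw [hO1] at this
    exact this
  obtain ⟨A, B, hA, hB, hA0, hB1, hAB⟩ := t2_separation (fun e => hne (hinj e) : h β₀ ≠ h β₁)
  -- disjoint closed neighbourhoods of the two points
  obtain ⟨N₀, hN₀, hN₀c, hN₀A⟩ := exists_mem_nhds_isClosed_subset (hA.mem_nhds hA0)
  obtain ⟨N₁, hN₁, hN₁c, hN₁B⟩ :=
    exists_mem_nhds_isClosed_subset ((hB.inter hO).mem_nhds ⟨hB1, hβ₁O⟩)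
  -- saturated open sets map to open sets
  have hopen : ∀ G : Set K, IsOpen G → IsOpen (p '' (G \ range h)) := by
    intro G hG
    rw [hp, ← (isQuotientMap_quotient_mk' (s := glue h hinj q)).isOpen_preimage]
    have : (Quotient.mk (glue h hinj q)) ⁻¹' (p '' (G \ range h)) = G \ range h := by
      ext x
      constructor
      · rintro ⟨y, hy, hyx⟩
        rcases glue_mk_eq_iff.1 hyx with rfl | ⟨β, β', h1, h2, h3⟩
        · exact hy
        · exact absurd ⟨β, h1⟩ hy.2
      · intro hx
        exact ⟨x, hx, rfl⟩
    have h2 : IsOpen (G \ range h) := hG.sdiff hC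
    rw [← this] at h2
    exact h2
  have hclos : ∀ (N : Set K) (β : T), N ∈ 𝓝 (h β) →
      p (h β) ∈ closure (p '' (interior N \ range h)) := by
    intro N β hN
    have h1 : h β ∈ closure (interior N \ range h) := by
      have h2 : interior N ⊆ closure (interior N ∩ (range h)ᶜ) :=
        hdense.open_subset_closure_inter isOpen_interior
      exact h2 (mem_interior_iff_mem_nhds.2 hN)
    exact image_closure_subset_closure_image hpc ⟨_, h1, rfl⟩
  have hsub : ∀ N : Set K, IsClosed N → closure (p '' (interior N \ range h)) ⊆ p '' N := by
    intro N hN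
    refine closure_minimal (image_mono (sdiff_subset.trans interior_subset)) (hpcl _ hN)
  have heq : p (h β₀) = p (h β₁) := glue_mk_eq_iff.2 (Or.inr ⟨β₀, β₁, rfl, rfl, hβ⟩)
  refine D.mem_good_of_two_sided (hopen _ isOpen_interior) (hopen _ isOpen_interior)
    (heq ▸ hclos N₀ β₀ hN₀) (hclos N₁ β₁ hN₁) ?_
  rintro c ⟨hc0, hc1⟩
  obtain ⟨x, hx, rfl⟩ := hsub _ hN₀c hc0
  obtain ⟨y, hy, hyx⟩ := hsub _ hN₁c hc1
  rcases glue_mk_eq_iff.1 hyx with rfl | ⟨β, β', h1, h2, h3⟩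
  · exact absurd (hN₁B hy).1 (Set.disjoint_left.1 hAB (hN₀A hx))
  · have h4 : h β ∈ O := h1 ▸ (hN₁B hy).2
    have h5 := hOC β h4
    rw [mem_singleton_iff, ← hyx, ← h1, h5]

end Gluing

/-! ### Embedded copies of the ordinal segment -/

section Segment

open Ordinal in
lemma isOpen_Iic_ordinal (β : Ordinal.{0}) : IsOpen (Iic β) := by
  have : Iic β = Iio (β + 1) := by
    ext γ
    simp [Order.lt_add_one_iff]
  rw [this]
  exact isOpen_Iio

instance : CompactSpace OrdinalSegmentOmega1 := by
  have : IsCompact (Iic omega1) := by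
    rw [← Set.Icc_bot]
    exact isCompact_Icc
  exact isCompact_iff_compactSpace.1 this

lemma isOpen_Iic_segment (β : OrdinalSegmentOmega1) : IsOpen (Iic β) := by
  have : Iic β = Subtype.val ⁻¹' (Iic β.1) := rfl
  rw [this]
  exact (isOpen_Iic_ordinal _).preimage continuous_subtype_val

/-- Isolated points are dense in `[0, ω₁]`: the least element of an open set is isolated. -/
lemma exists_isOpen_singleton_segment {O : Set OrdinalSegmentOmega1} (hO : IsOpen O)
    (hne : O.Nonempty) : ∃ β ∈ O, IsOpen {β} := by
  obtain ⟨β, hβ, hmin⟩ := WellFounded.has_min (wellFounded_lt (α := OrdinalSegmentOmega1)) O hne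
  refine ⟨β, hβ, ?_⟩
  have : {β} = O ∩ Iic β := by
    ext γ
    constructor
    · rintro rfl
      exact ⟨hβ, self_mem_Iic⟩
    · rintro ⟨h1, h2⟩
      exact le_antisymm h2 (not_lt.1 (hmin γ h1))
  rw [this]
  exact hO.inter (isOpen_Iic_segment β)

lemma interior_range_segment_eq_empty {M : Type u} [TopologicalSpace M]
    (hiso : ∀ x : M, ¬ IsOpen {x}) {h : OrdinalSegmentOmega1 → M} (hh : IsEmbedding h) :
    interior (range h) = ∅ := by
  by_contra hne
  obtain ⟨x, hx⟩ := Set.nonempty_iff_ne_empty.2 hne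
  obtain ⟨β, rfl⟩ := interior_subset hx
  obtain ⟨γ, hγ, hγo⟩ := exists_isOpen_singleton_segment
    (isOpen_interior.preimage hh.continuous) ⟨β, hx⟩
  obtain ⟨O, hO, hO1⟩ := hh.isOpen_iff.1 hγo
  apply hiso (h γ)
  have : {h γ} = O ∩ interior (range h) := by
    ext y
    constructor
    · rintro rfl
      have : γ ∈ h ⁻¹' O := by rw [hO1]; rfl
      exact ⟨this, hγ⟩
    · rintro ⟨h1, h2⟩
      obtain ⟨δ, rfl⟩ := interior_subset h2
      have h3 : δ ∈ h ⁻¹' O := h1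
      rw [hO1] at h3
      rw [mem_singleton_iff.1 h3]
      rfl
  rw [this]
  exact hO.inter isOpen_interior

lemma isOpen_singleton_add_one {l : Ordinal.{0}} (hl : l + 1 ∈ Iic omega1) :
    IsOpen {(⟨l + 1, hl⟩ : OrdinalSegmentOmega1)} := by
  have : {(⟨l + 1, hl⟩ : OrdinalSegmentOmega1)}
      = Subtype.val ⁻¹' (Ioi l) ∩ Iic ⟨l + 1, hl⟩ := by
    ext γ
    constructor
    · rintro rfl
      exact ⟨Order.lt_succ l, self_mem_Iic⟩
    · rintro ⟨h1, h2⟩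
      exact le_antisymm h2 (Order.add_one_le_of_lt (α := Ordinal.{0}) h1)
  rw [this]
  exact (isOpen_Ioi.preimage continuous_subtype_val).inter (isOpen_Iic_segment _)

lemma iSup_lt_omega1 {α : Type u} [Countable α] {f : α → Ordinal.{0}}
    (hf : ∀ a, f a < omega1) : (⨆ a, f a) < omega1 := by
  have h1 : omega1 = Ordinal.omega 1 := Cardinal.ord_aleph 1
  rw [h1] at hf ⊢
  exact Ordinal.iSup_lt_omega_one hf

/-- The countable ordinals that are not limits (`0` counts as a non-limit). They index
the clopen sets `(0, b]` that tell points of `[0, ω₁]` apart after gluing. -/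
def NonlimitIndex : Type 1 := {b : Ordinal.{0} // b < omega1 ∧ ¬ Order.IsSuccLimit b}

/-- The map on `[0, ω₁]` whose fibres are glued: it identifies `λ` with `λ + 1` for each countable
limit `λ`, and `0` with `ω₁`. -/
noncomputable def segmentMap (β : OrdinalSegmentOmega1) (b : NonlimitIndex) : Bool :=
  decide (0 < β.1 ∧ β.1 ≤ b.1)

lemma continuous_segmentMap : Continuous segmentMap := by
  refine continuous_pi fun b => ?_
  have hcl : IsClopen {β : OrdinalSegmentOmega1 | 0 < β.1 ∧ β.1 ≤ b.1} := by
    have h1 : IsClopen {β : Ordinal.{0} | 0 < β ∧ β ≤ b.1} := by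
      constructor
      · have : {β : Ordinal.{0} | 0 < β ∧ β ≤ b.1} = Icc 1 b.1 := by
          ext β
          simp [Order.one_le_iff_pos]
        rw [this]
        exact isClosed_Icc
      · exact (isOpen_Ioi (a := (0 : Ordinal.{0}))).inter (isOpen_Iic_ordinal b.1)
    exact h1.preimage continuous_subtype_val
  exact (continuous_boolIndicator_iff_isClopen _).2 hcl |>.congr fun β => by
    unfold segmentMap Set.boolIndicator
    simp only [Set.mem_ofPred_eq]
    split_ifs with h <;> simp [h]

lemma segmentMap_add_one {l : Ordinal.{0}} (hl : Order.IsSuccLimit l)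
    (h1 : l + 1 ∈ Iic omega1) :
    segmentMap ⟨l, (Order.le_succ l).trans h1⟩ = segmentMap ⟨l + 1, h1⟩ := by
  funext b
  unfold segmentMap
  have h0 : 0 < l := hl.bot_lt
  have hb : b.1 ≠ l := fun e => b.2.2 (e ▸ hl)
  congr 1
  simp only [eq_iff_iff]
  refine and_congr ⟨fun _ => ?_, fun _ => h0⟩ ?_
  · exact h0.trans_le (Order.le_succ l)
  · rw [Order.add_one_le_iff]
    exact ⟨fun h => lt_of_le_of_ne h hb.symm, le_of_lt⟩

lemma zero_le_omega1 : (0 : Ordinal.{0}) ≤ omega1 := bot_le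

lemma isSuccLimit_omega1 : Order.IsSuccLimit omega1 :=
  Cardinal.isSuccLimit_ord (Cardinal.aleph0_le_aleph 1)

lemma segmentMap_top : segmentMap ⟨omega1, self_mem_Iic⟩ = segmentMap ⟨0, zero_le_omega1⟩ := by
  funext b
  unfold segmentMap
  have h2 : ¬ omega1 ≤ b.1 := not_le.2 b.2.1
  simp [h2]

lemma segmentMap_ne {β : OrdinalSegmentOmega1} (h0 : 0 < β.1) (h1 : β.1 < omega1) :
    segmentMap ⟨omega1, self_mem_Iic⟩ ≠ segmentMap β := by
  intro e
  have h3 : β.1 + 1 < omega1 := isSuccLimit_omega1.succ_lt h1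
  have := congrFun e ⟨β.1 + 1, h3, Order.not_isSuccLimit_succ _⟩
  unfold segmentMap at this
  have h2 : ¬ omega1 ≤ β.1 + 1 := not_le.2 h3
  have h4 : β.1 ≤ β.1 + 1 := Order.le_succ _
  simp [h2, h0, h4] at this

/-- A compact space without isolated points that contains `[0, ω₁]` has a quotient without
a `DualSkeleton`. After gluing `λ` to `λ + 1` for limit `λ` and `0` to `ω₁`, all resulting points
are good; the image of `ω₁` is in the closure of the others, but of no countable part of them. -/
lemma exists_quotient_isEmpty_dualSkeleton {M : Type u} [TopologicalSpace M] [CompactSpace M]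
    [T2Space M] (hiso : ∀ x : M, ¬ IsOpen {x}) {h : OrdinalSegmentOmega1 → M}
    (hh : IsEmbedding h) :
    ∃ s : Setoid M, T2Space (Quotient s) ∧ IsEmpty (DualSkeleton (Quotient s)) := by
  have hcl := isClosed_glue (hinj := hh.injective) hh.continuous continuous_segmentMap
  have hT2 : T2Space (Quotient (glue h hh.injective segmentMap)) := t2Space_quotient _ hcl
  refine ⟨glue h hh.injective segmentMap, hT2, ⟨fun D => ?_⟩⟩
  have hempty := interior_range_segment_eq_empty hiso hh
  set p := Quotient.mk (glue h hh.injective segmentMap) with hp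
  have hpc : Continuous p := continuous_quotient_mk'
  have hpcl : IsClosedMap p := isClosedMap_quotientMk _ hcl
  have hlt : ∀ l : Ordinal.{0}, l < omega1 → l + 1 < omega1 := fun l hl =>
    isSuccLimit_omega1.succ_lt hl
  -- the image of `ω₁` is good
  have htop : p (h ⟨omega1, self_mem_Iic⟩) ∈ D.good := by
    have h0 : IsOpen {(⟨0, zero_le_omega1⟩ : OrdinalSegmentOmega1)} := by
      have : {(⟨0, zero_le_omega1⟩ : OrdinalSegmentOmega1)} = Iic ⟨0, zero_le_omega1⟩ := by
        ext γ
        simp only [mem_singleton_iff, mem_Iic]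
        exact ⟨le_of_eq, fun h => le_antisymm h (bot_le (a := γ.1))⟩
      rw [this]
      exact isOpen_Iic_segment _
    have h1 := D.mem_good_of_glue hh continuous_segmentMap hempty (β₀ := ⟨omega1, self_mem_Iic⟩)
      (fun e => isSuccLimit_omega1.bot_lt.ne' (congrArg Subtype.val e)) segmentMap_top h0
    have h2 : p (h ⟨omega1, self_mem_Iic⟩) = p (h ⟨0, zero_le_omega1⟩) :=
      glue_mk_eq_iff.2 (Or.inr ⟨_, _, rfl, rfl, segmentMap_top⟩)
    rw [h2]
    exact h1
  -- the points coming from countable limit ordinals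
  set A : Set (Quotient (glue h hh.injective segmentMap)) :=
    (fun β => p (h β)) '' {β : OrdinalSegmentOmega1 | β.1 < omega1 ∧ Order.IsSuccLimit β.1} with hA
  have hAD : A ⊆ D.good := by
    rintro _ ⟨⟨l, hl'⟩, ⟨hl1, hl2⟩, rfl⟩
    have hl3 : l + 1 ∈ Iic omega1 := (hlt l hl1).le
    have h1 := D.mem_good_of_glue hh continuous_segmentMap hempty (β₀ := ⟨l, hl'⟩)
      (fun e => (Order.lt_succ l).ne (congrArg Subtype.val e)) (segmentMap_add_one hl2 hl3)
      (isOpen_singleton_add_one hl3)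
    have h2 : p (h ⟨l, hl'⟩) = p (h ⟨l + 1, hl3⟩) :=
      glue_mk_eq_iff.2 (Or.inr ⟨_, _, rfl, rfl, segmentMap_add_one hl2 hl3⟩)
    simp only [h2]
    exact h1
  have hcls : p (h ⟨omega1, self_mem_Iic⟩) ∈ closure A := by
    refine image_closure_subset_closure_image (hpc.comp hh.continuous) ⟨⟨omega1, self_mem_Iic⟩, ?_, rfl⟩
    rw [closure_subtype]
    rw [mem_closure_iff_nhds]
    intro t ht
    obtain ⟨a, ha, hat⟩ := exists_Ioc_subset_of_mem_nhds ht ⟨0, isSuccLimit_omega1.bot_lt⟩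
    have h1 : a + Ordinal.omega0 < omega1 := by
      refine Ordinal.isPrincipal_add_ord (Cardinal.aleph0_le_aleph 1) ha ?_
      rw [Cardinal.lt_ord, Ordinal.card_omega0]
      exact Cardinal.aleph0_lt_aleph_one
    refine ⟨a + Ordinal.omega0, hat ⟨lt_add_of_pos_right a Ordinal.omega0_pos, h1.le⟩,
      ⟨a + Ordinal.omega0, h1.le⟩, ?_, rfl⟩
    exact And.intro h1 (Ordinal.isSuccLimit_add a Ordinal.isSuccLimit_omega0)
  obtain ⟨A', hA'A, hA'c, hA'⟩ := D.exists_countable_mem_closure hAD htop hcls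
  -- countably many limit ordinals are bounded by some countable `μ`
  have hex : ∀ a : A', ∃ β : OrdinalSegmentOmega1,
      (β.1 < omega1 ∧ Order.IsSuccLimit β.1) ∧ p (h β) = a.1 := fun a => hA'A a.2
  choose g hg1 hg2 using hex
  have : Countable A' := hA'c.to_subtype
  have hμ : (⨆ a, (g a).1) < omega1 := iSup_lt_omega1 fun a => (hg1 a).1
  have hclosed : IsClosed (p '' (h '' (Subtype.val ⁻¹' Icc 1 (⨆ a, (g a).1)))) := by
    have h1 : IsClosed (Subtype.val ⁻¹' Icc 1 (⨆ a, (g a).1) : Set OrdinalSegmentOmega1) :=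
      isClosed_Icc.preimage continuous_subtype_val
    exact hpcl _ (h1.isCompact.image hh.continuous).isClosed
  have hsub : A' ⊆ p '' (h '' (Subtype.val ⁻¹' Icc 1 (⨆ a, (g a).1))) := by
    intro a ha
    refine ⟨h (g ⟨a, ha⟩), ⟨_, ⟨?_, ?_⟩, rfl⟩, hg2 ⟨a, ha⟩⟩
    · exact Order.one_le_iff_pos.2 (hg1 ⟨a, ha⟩).2.bot_lt
    · exact Ordinal.le_iSup (fun a => (g a).1) ⟨a, ha⟩
  obtain ⟨_, ⟨β, ⟨hβ1, hβ2⟩, rfl⟩, hβ⟩ := closure_minimal hsub hclosed hA'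
  have hβ0 : 0 < β.1 := Order.one_le_iff_pos.1 hβ1
  have hβ3 : β.1 < omega1 := hβ2.trans_lt hμ
  rcases glue_mk_eq_iff.1 hβ with e | ⟨γ, γ', h1, h2, h3⟩
  · exact hβ3.ne (congrArg Subtype.val (hh.injective e))
  · rw [hh.injective h1, hh.injective h2] at h3
    exact segmentMap_ne hβ0 hβ3 h3.symm

end Segment

/-! ### Density of Gδ points -/

section Density

variable {K : Type u}

open Classical in
/-- The map of `K` onto the one-point compactification of `U` that sends the complement of `U`
to the point at infinity. -/
noncomputable def toOnePoint (U : Set K) (y : K) : OnePoint U :=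
  if hy : y ∈ U then ((⟨y, hy⟩ : U) : OnePoint U) else OnePoint.infty

lemma toOnePoint_of_mem {U : Set K} {y : K} (hy : y ∈ U) :
    toOnePoint U y = ((⟨y, hy⟩ : U) : OnePoint U) := dif_pos hy

lemma toOnePoint_of_notMem {U : Set K} {y : K} (hy : y ∉ U) : toOnePoint U y = OnePoint.infty :=
  dif_neg hy

lemma surjective_toOnePoint {U : Set K} (hU : Uᶜ.Nonempty) : Function.Surjective (toOnePoint U) := by
  intro z
  induction z using OnePoint.rec with
  | infty => exact hU.imp fun y hy => toOnePoint_of_notMem hy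
  | coe u => exact ⟨u, toOnePoint_of_mem u.2⟩

variable [TopologicalSpace K]

lemma continuous_toOnePoint [T2Space K] {U : Set K} (hU : IsOpen U) :
    Continuous (toOnePoint U) := by
  refine ⟨fun V hV => ?_⟩
  by_cases hinf : OnePoint.infty ∈ V
  · have h1 := (OnePoint.isOpen_iff_of_mem hinf).1 hV
    have h2 : IsClosed (Subtype.val '' (((↑) : U → OnePoint U) ⁻¹' V)ᶜ) :=
      (h1.2.image continuous_subtype_val).isClosed
    have h3 : toOnePoint U ⁻¹' V = (Subtype.val '' (((↑) : U → OnePoint U) ⁻¹' V)ᶜ)ᶜ := by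
      ext y
      by_cases hy : y ∈ U
      · simp [toOnePoint_of_mem hy, hy]
      · simp [toOnePoint_of_notMem hy, hy, hinf]
    rw [h3]
    exact h2.isOpen_compl
  · have h1 := (OnePoint.isOpen_iff_of_notMem hinf).1 hV
    have h3 : toOnePoint U ⁻¹' V = Subtype.val '' (((↑) : U → OnePoint U) ⁻¹' V) := by
      ext y
      by_cases hy : y ∈ U
      · simp [toOnePoint_of_mem hy, hy]
      · simp [toOnePoint_of_notMem hy, hy, hinf]
    rw [h3]
    exact hU.isOpenMap_subtype_val _ h1

/-- In a space of class `G₀` all of whose images carry a `DualSkeleton`, every nonempty open set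
contains a Gδ point. -/
lemma exists_isGδ_of_dualSkeleton [CompactSpace K] [T2Space K] (hG : InClassG0 K)
    (hD : ∀ (L : Type u) [TopologicalSpace L] [CompactSpace L] [T2Space L],
      (∃ f : K → L, Continuous f ∧ Function.Surjective f) → Nonempty (DualSkeleton L))
    {U : Set K} (hU : IsOpen U) (hne : U.Nonempty) : ∃ x ∈ U, IsGδ ({x} : Set K) := by
  by_contra! hcon
  obtain ⟨x, hx⟩ := hne
  -- removing `x` makes the point at infinity of the one-point compactification non-isolated
  have hV : IsOpen (U \ {x}) := hU.sdiff isClosed_singleton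
  have hVne : (U \ {x}).Nonempty := by
    by_contra hemp
    have h1 : U ⊆ {x} := Set.sdiff_eq_empty.1 (Set.not_nonempty_iff_eq_empty.1 hemp)
    have h2 : U = {x} := Subset.antisymm h1 (singleton_subset_iff.2 hx)
    exact hcon x hx (h2 ▸ hU.isGδ)
  obtain ⟨h, hh⟩ := hG _ hV hVne fun y hy => hcon y hy.1
  have hlc : LocallyCompactSpace (U \ {x} : Set K) := hV.locallyCompactSpace
  have hcont := continuous_toOnePoint hV
  have hsurj : Function.Surjective (toOnePoint (U \ {x})) :=
    surjective_toOnePoint ⟨x, fun hx' => hx'.2 rfl⟩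
  have hiso : ∀ z : OnePoint (U \ {x} : Set K), ¬ IsOpen {z} := by
    intro z hz
    have h1 := hz.preimage hcont
    induction z using OnePoint.rec with
    | infty =>
      have h2 : {x} = U ∩ toOnePoint (U \ {x}) ⁻¹' {OnePoint.infty} := by
        ext y
        constructor
        · rintro rfl
          exact ⟨hx, toOnePoint_of_notMem fun hx' => hx'.2 rfl⟩
        · rintro ⟨hy1, hy2⟩
          by_contra hy3
          rw [mem_preimage, toOnePoint_of_mem (show y ∈ U \ {x} from ⟨hy1, hy3⟩)] at hy2
          exact OnePoint.coe_ne_infty _ hy2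
      refine hcon x hx ?_
      rw [h2]
      exact (hU.inter h1).isGδ
    | coe u =>
      have h2 : {u.1} = toOnePoint (U \ {x}) ⁻¹' {((u : (U \ {x} : Set K)) : OnePoint _)} := by
        ext y
        constructor
        · rintro rfl
          exact toOnePoint_of_mem u.2
        · intro hy
          by_cases hyU : y ∈ U \ {x}
          · rw [mem_preimage, toOnePoint_of_mem hyU, mem_singleton_iff, OnePoint.coe_eq_coe] at hy
            exact congrArg Subtype.val hy
          · rw [mem_preimage, toOnePoint_of_notMem hyU, mem_singleton_iff] at hy
            exact absurd hy.symm (OnePoint.coe_ne_infty _)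
      refine hcon u.1 u.2.1 ?_
      rw [h2]
      exact h1.isGδ
  obtain ⟨s, hs, hemp⟩ := exists_quotient_isEmpty_dualSkeleton hiso hh
  obtain ⟨D⟩ := hD (Quotient s) ⟨fun y => Quotient.mk s (toOnePoint (U \ {x}) y),
    continuous_quotient_mk'.comp hcont, Quotient.mk_surjective.comp hsurj⟩
  exact hemp.false D

end Density

/-! ### All points are good -/

section AllGood

variable {K : Type u} [TopologicalSpace K] [CompactSpace K] [T2Space K]

/-- If all other points are isolated, then `x` is in the closure of any countable infinite set
not containing it. -/
lemma DualSkeleton.mem_good_of_only_nonisolated (D : DualSkeleton K) {x : K}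
    (hx : ¬ IsOpen {x}) (hall : ∀ d, d ≠ x → IsOpen {d}) : x ∈ D.good := by
  have hinf : ({x}ᶜ : Set K).Infinite := by
    intro hfin
    apply hx
    have := hfin.isClosed.isOpen_compl
    rwa [compl_compl] at this
  obtain ⟨Q, hQ, hQinf, hQc⟩ : ∃ Q ⊆ ({x}ᶜ : Set K), Q.Infinite ∧ Q.Countable := by
    refine ⟨range fun n => (hinf.natEmbedding _ n).1, ?_, ?_, countable_range _⟩
    · rintro _ ⟨n, rfl⟩
      exact (hinf.natEmbedding _ n).2
    · exact infinite_range_of_injective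
        (Subtype.val_injective.comp (hinf.natEmbedding _).injective)
  refine D.mem_good_of_countable hQc (fun d hd => D.mem_good_of_isGδ (hall d (hQ hd)).isGδ) ?_
  by_contra hxQ
  refine hQinf (Set.Finite.subset (s := closure Q) ?_ subset_closure)
  obtain ⟨t, ht⟩ := isClosed_closure.isCompact.elim_finite_subcover
    (fun d : {d // d ∈ closure Q} => ({d.1} : Set K))
    (fun d => hall d.1 fun e => hxQ (e ▸ d.2))
    (fun d hd => mem_iUnion.2 ⟨⟨d, hd⟩, rfl⟩)
  exact (t.finite_toSet.biUnion fun _ _ => finite_singleton _).subset ht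

/-- With Gδ points dense, gluing `x` to another non-isolated point `d` makes it good in the
quotient; countable tightness there yields a countable set of Gδ points of `K` accumulating
at `x`. -/
lemma DualSkeleton.mem_good_of_two_nonisolated (D : DualSkeleton K)
    (hD : ∀ (L : Type u) [TopologicalSpace L] [CompactSpace L] [T2Space L],
      (∃ f : K → L, Continuous f ∧ Function.Surjective f) → Nonempty (DualSkeleton L))
    (hdense : ∀ U : Set K, IsOpen U → U.Nonempty → ∃ x ∈ U, IsGδ ({x} : Set K))
    {x d : K} (hxd : x ≠ d) (hx : ¬ IsOpen {x}) (hd : ¬ IsOpen {d}) : x ∈ D.good := by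
  set h : Bool → K := fun b => bif b then x else d with hh
  have hinj : Function.Injective h := by
    rintro (_ | _) (_ | _) e
    · rfl
    · exact absurd e.symm hxd
    · exact absurd e hxd
    · rfl
  have hcont : Continuous h := continuous_of_discreteTopology
  have hemb : IsEmbedding h := (hcont.isClosedEmbedding hinj).isEmbedding
  set q : Bool → Unit := fun _ => () with hq
  have hqc : Continuous q := continuous_const
  have hcl := isClosed_glue (hinj := hinj) hcont hqc
  have hT2 : T2Space (Quotient (glue h hinj q)) := t2Space_quotient _ hcl
  set p := Quotient.mk (glue h hinj q) with hp
  have hpc : Continuous p := continuous_quotient_mk'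
  have hpcl : IsClosedMap p := isClosedMap_quotientMk _ hcl
  obtain ⟨E⟩ := hD (Quotient (glue h hinj q)) ⟨p, hpc, Quotient.mk_surjective⟩
  have hrange : ∀ b, h b = x ∨ h b = d := by
    rintro (_ | _)
    · exact Or.inr rfl
    · exact Or.inl rfl
  have hpinj : ∀ g y, g ≠ x → g ≠ d → p y = p g → y = g := by
    intro g y hgx hgd e
    rcases glue_mk_eq_iff.1 e with e | ⟨β, β', h1, h2, -⟩
    · exact e
    · rcases hrange β' with h3 | h3
      · exact absurd (h2.symm.trans h3) hgx
      · exact absurd (h2.symm.trans h3) hgd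
  have hempty : interior (range h) = ∅ := by
    by_contra hne
    obtain ⟨y, hy⟩ := Set.nonempty_iff_ne_empty.2 hne
    have hsub : ∀ z ∈ interior (range h), z = x ∨ z = d := by
      intro z hz
      obtain ⟨b, rfl⟩ := interior_subset hz
      exact hrange b
    rcases hsub y hy with rfl | rfl
    · apply hx
      have : {y} = interior (range h) \ {d} := by
        ext z
        constructor
        · rintro rfl
          exact ⟨hy, hxd⟩
        · rintro ⟨hz1, hz2⟩
          exact (hsub z hz1).resolve_right hz2
      rw [this]
      exact isOpen_interior.sdiff isClosed_singleton
    · apply hd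
      have : {y} = interior (range h) \ {x} := by
        ext z
        constructor
        · rintro rfl
          exact ⟨hy, hxd.symm⟩
        · rintro ⟨hz1, hz2⟩
          exact (hsub z hz1).resolve_left hz2
      rw [this]
      exact isOpen_interior.sdiff isClosed_singleton
  have hpx : p x ∈ E.good :=
    E.mem_good_of_glue hemb hqc hempty (β₀ := false) (β₁ := true) (by decide) rfl
      (isOpen_discrete _)
  obtain ⟨N, hN, hNc, hNd⟩ :=
    exists_mem_nhds_isClosed_subset (isOpen_compl_singleton.mem_nhds hxd : {d}ᶜ ∈ 𝓝 x)
  set G : Set K := {g | g ∈ N ∧ g ≠ x ∧ IsGδ ({g} : Set K)} with hGdef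
  have hGgood : p '' G ⊆ E.good := by
    rintro _ ⟨g, ⟨hgN, hgx, hg⟩, rfl⟩
    apply E.mem_good_of_isGδ
    obtain ⟨𝒯, h𝒯o, h𝒯c, h𝒯⟩ := hg
    refine ⟨(fun t => (p '' tᶜ)ᶜ) '' 𝒯, ?_, h𝒯c.image _, ?_⟩
    · rintro _ ⟨t, ht, rfl⟩
      exact (hpcl _ (h𝒯o t ht).isClosed_compl).isOpen_compl
    · ext c
      constructor
      · rintro rfl
        rintro _ ⟨t, ht, rfl⟩ ⟨z, hz, hzg⟩
        have h1 : z = g := hpinj g z hgx (hNd hgN) hzg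
        have h2 : g ∈ ⋂₀ 𝒯 := h𝒯 ▸ mem_singleton g
        exact hz (h1 ▸ h2 t ht)
      · intro hc
        obtain ⟨y, rfl⟩ := Quotient.exists_rep c
        have h1 : y ∈ ⋂₀ 𝒯 := by
          intro t ht
          by_contra hyt
          exact hc _ ⟨t, ht, rfl⟩ ⟨y, hyt, rfl⟩
        rw [← h𝒯] at h1
        exact congrArg p h1
  have hxG : x ∈ closure G := by
    rw [mem_closure_iff]
    intro O hO hxO
    have hO' : IsOpen ((O ∩ interior N) \ {x}) :=
      (hO.inter isOpen_interior).sdiff isClosed_singleton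
    have hne : ((O ∩ interior N) \ {x}).Nonempty := by
      by_contra hemp
      have h1 : O ∩ interior N ⊆ {x} := Set.sdiff_eq_empty.1 (Set.not_nonempty_iff_eq_empty.1 hemp)
      have h2 : O ∩ interior N = {x} :=
        Subset.antisymm h1 (singleton_subset_iff.2 ⟨hxO, mem_interior_iff_mem_nhds.2 hN⟩)
      exact hx (h2 ▸ hO.inter isOpen_interior)
    obtain ⟨g, ⟨⟨hgO, hgN⟩, hgx⟩, hg⟩ := hdense _ hO' hne
    exact ⟨g, hgO, And.intro (interior_subset hgN) (And.intro hgx hg)⟩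
  obtain ⟨A, hAG, hAc, hxA⟩ := E.exists_countable_mem_closure hGgood hpx
    (image_closure_subset_closure_image hpc ⟨x, hxG, rfl⟩)
  choose g hgG hgA using fun a : A => hAG a.2
  have : Countable A := hAc.to_subtype
  refine D.mem_good_of_countable (countable_range g) ?_ ?_
  · rintro _ ⟨a, rfl⟩
    exact D.mem_good_of_isGδ (hgG a).2.2
  · have h1 : A ⊆ p '' closure (range g) := fun a ha =>
      ⟨g ⟨a, ha⟩, subset_closure ⟨_, rfl⟩, hgA ⟨a, ha⟩⟩
    obtain ⟨y, hy, hyx⟩ := closure_minimal h1 (hpcl _ isClosed_closure) hxA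
    have hyN : y ∈ N := by
      refine closure_minimal ?_ hNc hy
      rintro _ ⟨a, rfl⟩
      exact (hgG a).1
    have hyx' : y = x := by
      rcases glue_mk_eq_iff.1 hyx with e | ⟨β, β', h1, -, -⟩
      · exact e
      · rcases hrange β with h3 | h3
        · exact h1.symm.trans h3
        · exact absurd (h1.symm.trans h3) (hNd hyN)
    exact hyx' ▸ hy

/-- A space of class `G₀` all of whose images carry a `DualSkeleton` is Corson. -/
lemma isCorsonCompact_of_dualSkeleton (hG : InClassG0 K)
    (hD : ∀ (L : Type u) [TopologicalSpace L] [CompactSpace L] [T2Space L],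
      (∃ f : K → L, Continuous f ∧ Function.Surjective f) → Nonempty (DualSkeleton L)) :
    IsCorsonCompact K := by
  obtain ⟨D⟩ := hD K ⟨id, continuous_id, Function.surjective_id⟩
  refine D.isCorsonCompact fun x => ?_
  by_cases hx : IsOpen {x}
  · exact D.mem_good_of_isGδ hx.isGδ
  by_cases hd : ∃ d, x ≠ d ∧ ¬ IsOpen {d}
  · obtain ⟨d, hxd, hd⟩ := hd
    exact D.mem_good_of_two_nonisolated hD
      (fun U hU hne => exists_isGδ_of_dualSkeleton hG hD hU hne) hxd hx hd
  · push Not at hd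
    exact D.mem_good_of_only_nonisolated hx fun d hd' => hd d hd'.symm

end AllGood

/-- For a compact Hausdorff space `K` in the class `G₀`, the following are equivalent:
(i) `K` is Corson compact;
(ii) `C(L)` has a 1-projectional skeleton for every continuous image `L` of `K`;
(iii) `(B_{C(L)*}, w*)` has a retractional skeleton for every continuous image `L` of `K`;
(iv) `P(L)` has a retractional skeleton for every continuous image `L` of `K`. -/
theorem corson_tfae_of_inClassG0 (K : Type u) [TopologicalSpace K] [CompactSpace K]
    [T2Space K] (hK : InClassG0 K) :
    List.TFAE [
      IsCorsonCompact K,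
      ∀ (L : Type u) [TopologicalSpace L] [CompactSpace L] [T2Space L],
        (∃ f : K → L, Continuous f ∧ Function.Surjective f) →
          Has1ProjectionalSkeleton C(L, ℝ),
      ∀ (L : Type u) [TopologicalSpace L] [CompactSpace L] [T2Space L],
        (∃ f : K → L, Continuous f ∧ Function.Surjective f) →
          HasRetractionalSkeleton ↥(dualBall C(L, ℝ)),
      ∀ (L : Type u) [TopologicalSpace L] [CompactSpace L] [T2Space L],
        (∃ f : K → L, Continuous f ∧ Function.Surjective f) →
          HasRetractionalSkeleton ↥(probMeasuresSet L)] := by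
  tfae_have 1 → 2 := by
    rintro h L _ _ _ ⟨f, hf, hs⟩
    exact has1ProjectionalSkeleton_of_corson h hf hs
  tfae_have 2 → 3 := fun h L _ _ _ hL => hasRetractionalSkeleton_dualBall (h L hL)
  tfae_have 2 → 4 := fun h L _ _ _ hL => hasRetractionalSkeleton_probMeasuresSet (h L hL)
  tfae_have 3 → 1 := fun h => isCorsonCompact_of_dualSkeleton hK fun L _ _ _ hL =>
    nonempty_dualSkeleton_of_dualBall (h L hL)
  tfae_have 4 → 1 := fun h => isCorsonCompact_of_dualSkeleton hK fun L _ _ _ hL =>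
    nonempty_dualSkeleton_of_probMeasuresSet (h L hL)
  tfae_finish
end

section
/- Let K be a compact Hausdorff space and let A and B be two subsets of K, each induced by an r-skeleton in K. If M ⊂ K is a set such that A ∩ B ∩ M is dense in M, then A ∩ M = B ∩ M. In particular, A = B whenever A ∩ B is dense in K. -/
/-! The set `D` induced by an r-skeleton has two properties. It is countably closed: countably many
points of `D` lie in a single `r t [K]`, which is closed. It is countably tight: if `x ∈ D` lies in
the closure of `S ⊆ D`, then `x` lies in the closure of a countable `C ⊆ S`. Granting these, a point
`x ∈ A ∩ M` lies in the closure of a countable subset of `A ∩ B ∩ M ⊆ B`, hence `x ∈ B`, and the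
claim follows by symmetry.

For countable tightness, metrizability of `r s [K]` gives a countable `C s ⊆ S` such that
`r s x = r s y` for some `y ∈ closure (C s)`. Choose an increasing sequence `f` with
`C (f n) ⊆ r (f (n + 1)) [K]` and `x ∈ r (f 0) [K]`, and let `t` be its supremum. With `C` the union
of the `C (f n)`, the sets `{y ∈ closure C | r (f n) y = x}` are compact, nonempty and decreasing, so
some `y ∈ closure C` lies in all of them. Then `y = r t y = lim r (f n) y = x`. -/

open Filter Topology TopologicalSpace Set

universe u v

namespace RetractionalSkeleton

variable {K : Type u} [TopologicalSpace K]

attribute [local instance] RetractionalSkeleton.po RetractionalSkeleton.ne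

lemma r_eq_self_of_mem_range (𝔰 : RetractionalSkeleton K) {s t : 𝔰.Γ} (hst : s ≤ t) {x : K}
    (hx : x ∈ range (𝔰.r s)) : 𝔰.r t x = x := by
  obtain ⟨z, rfl⟩ := hx
  exact (𝔰.comp_eq_of_le s t hst z).2

/-- Recursive construction of increasing sequences in the index set: the term `f (n + 1)` can be
required to exceed any index `g n (f n)` depending on the previous one. Since the supremum axiom
only concerns strictly increasing sequences, an index set with a largest element is treated
separately, with a constant sequence. -/
lemma exists_seq (𝔰 : RetractionalSkeleton K) (s₀ : 𝔰.Γ) (g : ℕ → 𝔰.Γ → 𝔰.Γ) :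
    ∃ (f : ℕ → 𝔰.Γ) (t : 𝔰.Γ), Monotone f ∧ s₀ ≤ f 0 ∧ (∀ n, g n (f n) ≤ f (n + 1)) ∧
      (∀ n, f n ≤ t) ∧ ∀ x, Tendsto (fun n => 𝔰.r (f n) x) atTop (𝓝 (𝔰.r t x)) := by
  by_cases h : ∃ m : 𝔰.Γ, ∀ s, s ≤ m
  · obtain ⟨m, hm⟩ := h
    exact ⟨fun _ => m, m, monotone_const, hm _, fun _ => hm _, fun _ => hm _,
      fun x => tendsto_const_nhds⟩
  · have hlt : ∀ s u : 𝔰.Γ, ∃ w, s < w ∧ u ≤ w := by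
      intro s u
      push Not at h
      obtain ⟨v, hv⟩ := h s
      obtain ⟨w, hsw, hvw⟩ := 𝔰.directed s v
      obtain ⟨w', hw, hu⟩ := 𝔰.directed w u
      refine ⟨w', lt_of_le_of_ne (hsw.trans hw) ?_, hu⟩
      rintro rfl
      exact hv (hvw.trans hw)
    choose nx hnx1 hnx2 using hlt
    let f : ℕ → 𝔰.Γ := fun n => Nat.rec s₀ (fun n s => nx s (g n s)) n
    have hf : StrictMono f := strictMono_nat_of_lt_succ fun n => hnx1 _ _
    obtain ⟨t, ht, hlim⟩ := 𝔰.sup_seq f hf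
    exact ⟨f, t, hf.monotone, le_rfl, fun n => hnx2 _ _, fun n => ht.1 ⟨n, rfl⟩, hlim⟩

lemma exists_range_of_countable (𝔰 : RetractionalSkeleton K) {C : Set K} (hC : C.Countable)
    (hCD : C ⊆ 𝔰.inducedSet) : ∃ t, C ⊆ range (𝔰.r t) := by
  rcases C.eq_empty_or_nonempty with rfl | hne
  · exact ⟨Classical.arbitrary _, empty_subset _⟩
  · obtain ⟨c, rfl⟩ := hC.exists_eq_range hne
    have h : ∀ n, ∃ s, c n ∈ range (𝔰.r s) := fun n => mem_iUnion.1 (hCD ⟨n, rfl⟩)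
    choose s hs using h
    obtain ⟨f, t, -, -, hg, ht, -⟩ := 𝔰.exists_seq (Classical.arbitrary _) (fun n _ => s n)
    refine ⟨t, ?_⟩
    rintro _ ⟨n, rfl⟩
    exact ⟨c n, 𝔰.r_eq_self_of_mem_range ((hg n).trans (ht _)) (hs n)⟩

variable [CompactSpace K] [T2Space K]

lemma isClosed_range (𝔰 : RetractionalSkeleton K) (s : 𝔰.Γ) : IsClosed (range (𝔰.r s)) :=
  (isCompact_range (𝔰.r s).continuous).isClosed

lemma closure_subset_of_countable (𝔰 : RetractionalSkeleton K) {C : Set K} (hC : C.Countable)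
    (hCD : C ⊆ 𝔰.inducedSet) : closure C ⊆ 𝔰.inducedSet := by
  obtain ⟨t, ht⟩ := 𝔰.exists_range_of_countable hC hCD
  exact (closure_minimal ht (𝔰.isClosed_range t)).trans (subset_iUnion (fun s => range (𝔰.r s)) t)

/-- Countable tightness of the metrizable space `r s [K]`, pulled back to `K` along `r s`. -/
lemma exists_countable_r_eq (𝔰 : RetractionalSkeleton K) {S : Set K} {x : K}
    (hx : x ∈ closure S) (s : 𝔰.Γ) :
    ∃ C ⊆ S, C.Countable ∧ ∃ y ∈ closure C, 𝔰.r s y = 𝔰.r s x := by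
  have := 𝔰.metrizable s
  let q : K → range (𝔰.r s) := rangeFactorization (𝔰.r s)
  have hq : Continuous q := (𝔰.r s).continuous.subtype_mk _
  have hqx : q x ∈ closure (q '' S) :=
    image_closure_subset_closure_image hq (mem_image_of_mem q hx)
  obtain ⟨u, hu, hlim⟩ := mem_closure_iff_seq_limit.1 hqx
  choose c hcS hc using hu
  refine ⟨range c, range_subset_iff.2 hcS, countable_range c, ?_⟩
  have hmem : q x ∈ closure (q '' range c) :=
    mem_closure_of_tendsto hlim (Eventually.of_forall fun n => ⟨c n, ⟨n, rfl⟩, hc n⟩)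
  have hcl : IsClosed (q '' closure (range c)) :=
    (isClosed_closure.isCompact.image hq).isClosed
  obtain ⟨y, hy, hyx⟩ := closure_minimal (image_mono subset_closure) hcl hmem
  exact ⟨y, hy, congrArg Subtype.val hyx⟩

/-- The set induced by an r-skeleton is countably tight. -/
lemma exists_countable_mem_closure_s4 (𝔰 : RetractionalSkeleton K) {S : Set K} {x : K}
    (hS : S ⊆ 𝔰.inducedSet) (hxD : x ∈ 𝔰.inducedSet) (hx : x ∈ closure S) :
    ∃ C ⊆ S, C.Countable ∧ x ∈ closure C := by
  obtain ⟨s₀, hs₀⟩ := mem_iUnion.1 hxD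
  choose C hCS hC y hyC hyx using 𝔰.exists_countable_r_eq hx
  choose g hg using fun s => 𝔰.exists_range_of_countable (hC s) ((hCS s).trans hS)
  obtain ⟨f, t, hf, h0, hgf, ht, hlim⟩ := 𝔰.exists_seq s₀ (fun _ s => g s)
  refine ⟨⋃ n, C (f n), iUnion_subset fun n => hCS _, countable_iUnion fun n => hC _, ?_⟩
  have hfx : ∀ n, 𝔰.r (f n) x = x := fun n =>
    𝔰.r_eq_self_of_mem_range (h0.trans (hf (Nat.zero_le n))) hs₀
  let F : ℕ → Set K := fun n => closure (⋃ n, C (f n)) ∩ {z | 𝔰.r (f n) z = x}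
  have hFcl : ∀ n, IsClosed (F n) := fun n =>
    isClosed_closure.inter (isClosed_eq (𝔰.r (f n)).continuous continuous_const)
  obtain ⟨z, hz⟩ : (⋂ n, F n).Nonempty := by
    refine IsCompact.nonempty_iInter_of_sequence_nonempty_isCompact_isClosed F ?_ ?_
      (hFcl 0).isCompact hFcl
    · rintro n z ⟨hz, hzx : 𝔰.r (f (n + 1)) z = x⟩
      refine ⟨hz, ?_⟩
      have := (𝔰.comp_eq_of_le _ _ (hf n.le_succ) z).1
      rw [hzx, hfx] at this
      exact this.symm
    · intro n
      exact ⟨y (f n), closure_mono (subset_iUnion (fun n => C (f n)) n) (hyC _),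
        (hyx _).trans (hfx n)⟩
  rw [mem_iInter] at hz
  have hCt : closure (⋃ n, C (f n)) ⊆ range (𝔰.r t) := by
    refine closure_minimal (iUnion_subset fun n w hw => ?_) (𝔰.isClosed_range t)
    exact ⟨w, 𝔰.r_eq_self_of_mem_range ((hgf n).trans (ht _)) (hg _ hw)⟩
  have hzt : 𝔰.r t z = z := 𝔰.r_eq_self_of_mem_range le_rfl (hCt (hz 0).1)
  have hzx : 𝔰.r t z = x := by
    refine tendsto_nhds_unique (hlim z) ?_
    have : (fun n => 𝔰.r (f n) z) = fun _ => x := funext fun n => (hz n).2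
    rw [this]
    exact tendsto_const_nhds
  rw [← hzx, hzt]
  exact (hz 0).1

lemma inter_subset_of_subset_closure (𝔰 𝔱 : RetractionalSkeleton K) {M : Set K}
    (hM : M ⊆ closure (𝔰.inducedSet ∩ 𝔱.inducedSet ∩ M)) :
    𝔰.inducedSet ∩ M ⊆ 𝔱.inducedSet ∩ M := by
  rintro x ⟨hx, hxM⟩
  obtain ⟨C, hCS, hC, hxC⟩ :=
    𝔰.exists_countable_mem_closure_s4 (fun z hz => hz.1.1) hx (hM hxM)
  exact ⟨𝔱.closure_subset_of_countable hC (fun z hz => (hCS hz).1.2) hxC, hxM⟩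

end RetractionalSkeleton

/-- If `A` and `B` are induced by r-skeletons in a compact Hausdorff space `K` and
`A ∩ B ∩ M` is dense in `M ⊆ K`, then `A ∩ M = B ∩ M`; in particular `A = B` whenever
`A ∩ B` is dense in `K`. -/
theorem inducedByRSkeleton_unique (K : Type u) [TopologicalSpace K] [CompactSpace K]
    [T2Space K] (A B : Set K) (hA : IsInducedByRSkeleton A) (hB : IsInducedByRSkeleton B) :
    (∀ M : Set K, M ⊆ closure (A ∩ B ∩ M) → A ∩ M = B ∩ M) ∧
      (Dense (A ∩ B) → A = B) := by
  have key : ∀ M : Set K, M ⊆ closure (A ∩ B ∩ M) → A ∩ M = B ∩ M := by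
    obtain ⟨𝔰, rfl⟩ := hA
    obtain ⟨𝔱, rfl⟩ := hB
    intro M hM
    refine (𝔰.inter_subset_of_subset_closure 𝔱 hM).antisymm
      (𝔱.inter_subset_of_subset_closure 𝔰 ?_)
    rwa [inter_comm 𝔱.inducedSet]
  refine ⟨key, fun h => ?_⟩
  simpa using key univ (by rw [inter_univ, h.closure_eq])
end

section
/- Let K be a compact Hausdorff space and let D ⊂ K be induced by an r-skeleton in K. Then G ∩ D is dense in G whenever G ⊂ K is a Gδ set (a countable intersection of open sets). In particular, if x ∈ K is a Gδ point (i.e., {x} is a Gδ set), then x ∈ D. -/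
/-!
The index set `Γ` of a skeleton is countably directed (`RetractionalSkeleton.exists_ge_seq`): this is
all that is used of the suprema of sequences. Given `x ∈ G = ⋂ n, U n` with `U n` open and an open
neighbourhood `V` of `x`, convergence of the net `(r s x)` to `x` provides for each `n` an index past
which `r s x ∈ V ∩ U n`. An upper bound `t` of these countably many indices satisfies
`r t x ∈ V ∩ G ∩ D`. For a Gδ point, density of `{x} ∩ D` in `{x}` forces `x ∈ D`.
-/

open Filter Topology TopologicalSpace Set

universe u v

/-- Every sequence of indices of a skeleton has an upper bound. Since suprema are only provided for
strictly increasing sequences, an index set with a maximal (hence greatest) element is treated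
separately. -/
theorem RetractionalSkeleton.exists_ge_seq {K : Type u} [TopologicalSpace K]
    (𝔰 : RetractionalSkeleton K) (s : ℕ → 𝔰.Γ) :
    ∃ t : 𝔰.Γ, ∀ n, 𝔰.po.le (s n) t := by
  letI := 𝔰.po
  by_cases hmax : ∃ m : 𝔰.Γ, ∀ a, ¬ m < a
  · obtain ⟨m, hm⟩ := hmax
    refine ⟨m, fun n => ?_⟩
    obtain ⟨w, hmw, hsw⟩ := 𝔰.directed m (s n)
    have hw : m = w := hmw.eq_of_not_lt (hm w)
    exact hw ▸ hsw
  · push Not at hmax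
    have hstep : ∀ a b : 𝔰.Γ, ∃ c, a < c ∧ b ≤ c := by
      intro a b
      obtain ⟨a', ha'⟩ := hmax a
      obtain ⟨c, hac, hbc⟩ := 𝔰.directed a' b
      exact ⟨c, ha'.trans_le hac, hbc⟩
    choose g hg_lt hg_le using hstep
    let f : ℕ → 𝔰.Γ := fun n => Nat.rec (s 0) (fun k p => g p (s (k + 1))) n
    have hf : StrictMono f := strictMono_nat_of_lt_succ fun n => hg_lt (f n) (s (n + 1))
    have hsf : ∀ n, s n ≤ f n := by
      intro n
      cases n with
      | zero => exact le_rfl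
      | succ k => exact hg_le (f k) (s (k + 1))
    obtain ⟨t, ht, -⟩ := 𝔰.sup_seq f hf
    exact ⟨t, fun n => (hsf n).trans (ht.1 (mem_range_self n))⟩

/-- If `D` is induced by an r-skeleton in a compact Hausdorff space `K`, then `G ∩ D` is
dense in `G` for every Gδ set `G ⊆ K`; in particular every Gδ point of `K` lies in `D`. -/
theorem inducedByRSkeleton_dense_in_Gdelta (K : Type u) [TopologicalSpace K] [CompactSpace K]
    [T2Space K] (D : Set K) (hD : IsInducedByRSkeleton D) :
    (∀ G : Set K, IsGδ G → G ⊆ closure (G ∩ D)) ∧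
      (∀ x : K, IsGδ ({x} : Set K) → x ∈ D) := by
  obtain ⟨𝔰, rfl⟩ := hD
  letI := 𝔰.po
  haveI := 𝔰.ne
  haveI : IsDirectedOrder 𝔰.Γ := ⟨𝔰.directed⟩
  have key : ∀ G : Set K, IsGδ G → G ⊆ closure (G ∩ 𝔰.inducedSet) := by
    intro G hG x hx
    obtain ⟨U, hU, rfl⟩ := hG.eq_iInter_nat
    rw [mem_closure_iff]
    intro V hV hxV
    have hev : ∀ n, ∃ s, ∀ t, s ≤ t → 𝔰.r t x ∈ V ∩ U n := fun n =>
      eventually_atTop.1 <| (𝔰.tendsto_id x).eventually_mem <|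
        (hV.inter (hU n)).mem_nhds ⟨hxV, mem_iInter.1 hx n⟩
    choose s hs using hev
    obtain ⟨t, ht⟩ := 𝔰.exists_ge_seq s
    exact ⟨𝔰.r t x, (hs 0 t (ht 0)).1, mem_iInter.2 fun n => (hs n t (ht n)).2,
      mem_iUnion.2 ⟨t, mem_range_self x⟩⟩
  refine ⟨key, fun x hx => ?_⟩
  obtain ⟨y, hy, hyD⟩ := closure_nonempty_iff.1 ⟨x, key {x} hx rfl⟩
  exact mem_singleton_iff.1 hy ▸ hyD
end

section
/- Let K be a compact Hausdorff space whose set of Gδ points is dense in K. Then there is at most one subset of K which is induced by an r-skeleton in K; that is, if A and B are both induced by r-skeletons in K, then A = B. -/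
/-!
Let `D` be the set induced by an r-skeleton. Three properties of `D` give the theorem.

* Every Gδ point belongs to `D` (`mem_inducedSet_of_isGδ`): if `{x} = ⋂ n, U n`, there are indices
  `s n` past which `r s x ∈ U n`, and a common upper bound `t` of the `s n` satisfies `r t x = x`.
* `D` contains the closure of each of its countable subsets, since countably many
  points of `D` lie in a single closed set `r t [K]` (`exists_le_subset_range`).
* `D` is countably tight (`exists_countable_mem_closure`): if `x ∈ D` lies in the closure of
  `C ⊆ D`, then it lies in the closure of a countable subset of `C`. To see this, take
  `s 0 ≤ s 1 ≤ ⋯` and countable `C n ⊆ C` such that `r (s n) [C n]` is dense in `r (s n) [C]` and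
  `C n ⊆ r (s (n + 1)) [K]`. With `E` the closure of `⋃ n, C n`, the closed sets
  `{z ∈ E | r (s n) z = x}` are nonempty and decreasing; a common point `z` lies in `r t [K]` for
  `t = sup s n`, so `z = r t z = lim r (s n) z = x`.

If `A` and `B` are both induced, a point of `A` is in the closure of the set of Gδ points, hence by
tightness of `A` in the closure of countably many of them; these belong to `B`, which
contains that closure. So `A ⊆ B`, and the reverse inclusion is symmetric.
-/

open Filter Topology TopologicalSpace Set

universe u v

namespace RetractionalSkeleton

variable {K : Type u} [TopologicalSpace K] (𝔰 : RetractionalSkeleton K)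

attribute [local instance] RetractionalSkeleton.po RetractionalSkeleton.ne

/-- A version of `sup_seq` for sequences that are only monotone: such a sequence is either
eventually constant or has a strictly increasing subsequence. -/
lemma exists_sup_of_monotone [T2Space K] (f : ℕ → 𝔰.Γ) (hf : Monotone f) :
    ∃ t : 𝔰.Γ, (∀ n, f n ≤ t) ∧ ∀ z x : K, (∀ n, 𝔰.r (f n) z = x) → 𝔰.r t z = x := by
  by_cases h : ∃ N, ∀ n, f n ≤ f N
  · obtain ⟨N, hN⟩ := h
    exact ⟨f N, hN, fun z x hz => hz N⟩
  · push Not at h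
    have h' : ∀ N, ∃ n, f N < f n := by
      intro N
      obtain ⟨n, hn⟩ := h N
      have hNn : N ≤ n := by
        by_contra hlt
        exact hn (hf (not_le.mp hlt).le)
      exact ⟨n, lt_of_le_not_ge (hf hNn) hn⟩
    choose ψ hψ using h'
    let φ : ℕ → ℕ := fun n => Nat.rec 0 (fun _ m => ψ m) n
    have hg : StrictMono (f ∘ φ) := strictMono_nat_of_lt_succ fun n => hψ (φ n)
    have hφ : StrictMono φ := strictMono_nat_of_lt_succ fun n =>
      lt_of_not_ge fun hle => (hψ (φ n)).not_ge (hf hle)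
    obtain ⟨t, ht, hlim⟩ := 𝔰.sup_seq (f ∘ φ) hg
    refine ⟨t, fun n => (hf (hφ.id_le n)).trans (ht.1 ⟨n, rfl⟩), fun z x hz => ?_⟩
    refine tendsto_nhds_unique (hlim z) ?_
    simp [hz]

lemma exists_upper_bound [T2Space K] (f : ℕ → 𝔰.Γ) : ∃ t : 𝔰.Γ, ∀ n, f n ≤ t := by
  choose j hj using 𝔰.directed
  let g : ℕ → 𝔰.Γ := fun n => Nat.rec (f 0) (fun k s => j s (f (k + 1))) n
  have hg : Monotone g := monotone_nat_of_le_succ fun n => (hj (g n) (f (n + 1))).1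
  have hfg : ∀ n, f n ≤ g n
    | 0 => le_rfl
    | n + 1 => (hj (g n) (f (n + 1))).2
  obtain ⟨t, ht, -⟩ := 𝔰.exists_sup_of_monotone g hg
  exact ⟨t, fun n => (hfg n).trans (ht n)⟩

lemma mem_inducedSet_of_isGδ [T2Space K] {x : K} (hx : IsGδ ({x} : Set K)) :
    x ∈ 𝔰.inducedSet := by
  obtain ⟨U, hU, hxU⟩ := isGδ_iff_eq_iInter_nat.mp hx
  have hmem : ∀ n, x ∈ U n := mem_iInter.mp (hxU ▸ mem_singleton x)
  have : IsDirectedOrder 𝔰.Γ := ⟨𝔰.directed⟩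
  have h : ∀ n, ∃ s, ∀ t ≥ s, 𝔰.r t x ∈ U n := fun n =>
    eventually_atTop.mp ((𝔰.tendsto_id x).eventually ((hU n).mem_nhds (hmem n)))
  choose s hs using h
  obtain ⟨t, ht⟩ := 𝔰.exists_upper_bound s
  have hfix : 𝔰.r t x ∈ ({x} : Set K) := by
    rw [hxU]
    exact mem_iInter.mpr fun n => hs n t (ht n)
  exact mem_iUnion.mpr ⟨t, x, hfix⟩

lemma apply_eq_of_mem_range {s t : 𝔰.Γ} (hst : s ≤ t) {x : K} (hx : x ∈ range (𝔰.r s)) :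
    𝔰.r t x = x := by
  obtain ⟨y, rfl⟩ := hx
  exact (𝔰.comp_eq_of_le s t hst y).2

lemma exists_le_subset_range [T2Space K] (s : 𝔰.Γ) {C : Set K} (hC : C.Countable)
    (hCD : C ⊆ 𝔰.inducedSet) : ∃ t, s ≤ t ∧ C ⊆ range (𝔰.r t) := by
  rcases C.eq_empty_or_nonempty with rfl | hne
  · exact ⟨s, le_rfl, empty_subset _⟩
  obtain ⟨c, rfl⟩ := hC.exists_eq_range hne
  have h : ∀ n, ∃ a, c n ∈ range (𝔰.r a) := fun n => mem_iUnion.mp (hCD ⟨n, rfl⟩)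
  choose a ha using h
  obtain ⟨t, ht⟩ := 𝔰.exists_upper_bound a
  obtain ⟨w, hsw, htw⟩ := 𝔰.directed s t
  refine ⟨w, hsw, ?_⟩
  rintro _ ⟨n, rfl⟩
  exact ⟨c n, 𝔰.apply_eq_of_mem_range ((ht n).trans htw) (ha n)⟩

lemma closure_subset_inducedSet [CompactSpace K] [T2Space K] {C : Set K} (hC : C.Countable)
    (hCD : C ⊆ 𝔰.inducedSet) : closure C ⊆ 𝔰.inducedSet := by
  obtain ⟨s⟩ := 𝔰.ne
  obtain ⟨t, -, ht⟩ := 𝔰.exists_le_subset_range s hC hCD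
  exact (closure_minimal ht (isCompact_range (𝔰.r t).continuous).isClosed).trans
    (subset_iUnion (fun t => range (𝔰.r t)) t)

/-- The image `r s [C]` is separable, being a subset of the compact metrizable space `r s [K]`. -/
lemma exists_countable_image_dense [CompactSpace K] (s : 𝔰.Γ) (C : Set K) :
    ∃ C₀ ⊆ C, C₀.Countable ∧ 𝔰.r s '' C ⊆ closure (𝔰.r s '' C₀) := by
  rcases C.eq_empty_or_nonempty with rfl | ⟨x₀, -⟩
  · exact ⟨∅, le_rfl, countable_empty, by simp⟩
  have : Nonempty K := ⟨x₀⟩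
  have := 𝔰.metrizable s
  let := metrizableSpaceMetric (range (𝔰.r s))
  have : CompactSpace (range (𝔰.r s)) :=
    isCompact_iff_compactSpace.mp (isCompact_range (𝔰.r s).continuous)
  let g : K → range (𝔰.r s) := rangeFactorization (𝔰.r s)
  obtain ⟨T, hTC, hT, hdT⟩ := (IsSeparable.of_separableSpace (g '' C)).exists_countable_dense_subset
  have hlift : ∀ y, y ∈ T → ∃ a, a ∈ C ∧ g a = y := fun y hy => hTC hy
  choose! h hhC hh using hlift
  refine ⟨h '' T, ?_, hT.image h, ?_⟩
  · rintro _ ⟨y, hy, rfl⟩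
    exact hhC y hy
  · rintro _ ⟨x, hx, rfl⟩
    have h1 : g x ∈ closure T := hdT ⟨x, hx, rfl⟩
    have h2 := image_closure_subset_closure_image continuous_subtype_val ⟨_, h1, rfl⟩
    refine closure_mono ?_ h2
    rintro _ ⟨y, hy, rfl⟩
    exact ⟨h y, ⟨y, hy, rfl⟩, congrArg Subtype.val (hh y hy)⟩

/-- Countable tightness of the induced set. -/
lemma exists_countable_mem_closure_s6 [CompactSpace K] [T2Space K] {C : Set K}
    (hC : C ⊆ 𝔰.inducedSet) {x : K} (hx : x ∈ 𝔰.inducedSet) (hxC : x ∈ closure C) :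
    ∃ C₀ ⊆ C, C₀.Countable ∧ x ∈ closure C₀ := by
  obtain ⟨s₀, hs₀⟩ := mem_iUnion.mp hx
  choose c hcC hc hcd using fun s => 𝔰.exists_countable_image_dense s C
  choose next hnext hcnext using fun s =>
    𝔰.exists_le_subset_range s (hc s) ((hcC s).trans hC)
  let f : ℕ → 𝔰.Γ := fun n => Nat.rec s₀ (fun _ s => next s) n
  have hf : Monotone f := monotone_nat_of_le_succ fun n => hnext (f n)
  have hfx : ∀ n, 𝔰.r (f n) x = x := fun n => 𝔰.apply_eq_of_mem_range (hf (Nat.zero_le n)) hs₀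
  obtain ⟨t, ht, hlim⟩ := 𝔰.exists_sup_of_monotone f hf
  refine ⟨⋃ n, c (f n), iUnion_subset fun n => hcC _, countable_iUnion fun n => hc _, ?_⟩
  set E := closure (⋃ n, c (f n)) with hE
  have hEt : E ⊆ range (𝔰.r t) := by
    refine closure_minimal (iUnion_subset fun n y hy => ?_)
      (isCompact_range (𝔰.r t).continuous).isClosed
    exact ⟨y, 𝔰.apply_eq_of_mem_range (ht (n + 1)) (hcnext (f n) hy)⟩
  let F : ℕ → Set K := fun n => E ∩ 𝔰.r (f n) ⁻¹' {x}
  have hFclosed : ∀ n, IsClosed (F n) := fun n =>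
    isClosed_closure.inter (isClosed_singleton.preimage (𝔰.r (f n)).continuous)
  have hFne : ∀ n, (F n).Nonempty := by
    intro n
    have h1 : x ∈ closure (𝔰.r (f n) '' C) := by
      have := image_closure_subset_closure_image (𝔰.r (f n)).continuous ⟨x, hxC, rfl⟩
      rwa [hfx n] at this
    have h2 : x ∈ closure (𝔰.r (f n) '' c (f n)) :=
      closure_minimal (hcd (f n)) isClosed_closure h1
    have h3 : x ∈ 𝔰.r (f n) '' E := by
      refine closure_minimal (image_mono ?_)
        (isClosed_closure.isCompact.image (𝔰.r (f n)).continuous).isClosed h2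
      exact (subset_iUnion (fun n => c (f n)) n).trans subset_closure
    obtain ⟨z, hz, hzx⟩ := h3
    exact ⟨z, hz, hzx⟩
  have hFanti : ∀ n, F (n + 1) ⊆ F n := by
    rintro n z ⟨hzE, hz⟩
    refine ⟨hzE, ?_⟩
    have hz' : 𝔰.r (f (n + 1)) z = x := hz
    have h1 := (𝔰.comp_eq_of_le _ _ (hf (Nat.le_succ n)) z).1
    rw [hz', hfx n] at h1
    exact h1.symm
  obtain ⟨z, hz⟩ := IsCompact.nonempty_iInter_of_sequence_nonempty_isCompact_isClosed F hFanti hFne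
    (hFclosed 0).isCompact hFclosed
  rw [mem_iInter] at hz
  have h1 : 𝔰.r t z = x := hlim z x fun n => (hz n).2
  have h2 : 𝔰.r t z = z := 𝔰.apply_eq_of_mem_range le_rfl (hEt (hz 0).1)
  exact (h2.symm.trans h1) ▸ (hz 0).1

lemma inducedSet_subset [CompactSpace K] [T2Space K]
    (hdense : Dense {x : K | IsGδ ({x} : Set K)}) (𝔱 : RetractionalSkeleton K) :
    𝔰.inducedSet ⊆ 𝔱.inducedSet := by
  intro x hx
  obtain ⟨C₀, hC₀, hcount, hxC₀⟩ := 𝔰.exists_countable_mem_closure_s6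
    (fun y hy => 𝔰.mem_inducedSet_of_isGδ hy) hx (hdense x)
  exact 𝔱.closure_subset_inducedSet hcount (fun y hy => 𝔱.mem_inducedSet_of_isGδ (hC₀ hy)) hxC₀

end RetractionalSkeleton

/-- If a compact Hausdorff space `K` has a dense set of Gδ points, then at most one subset
of `K` is induced by an r-skeleton in `K`. -/
theorem inducedByRSkeleton_unique_of_dense_Gdelta_points (K : Type u) [TopologicalSpace K]
    [CompactSpace K] [T2Space K] (hdense : Dense {x : K | IsGδ ({x} : Set K)})
    (A B : Set K) (hA : IsInducedByRSkeleton A) (hB : IsInducedByRSkeleton B) :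
    A = B := by
  obtain ⟨𝔰, rfl⟩ := hA
  obtain ⟨𝔱, rfl⟩ := hB
  exact (𝔰.inducedSet_subset hdense 𝔱).antisymm (𝔱.inducedSet_subset hdense 𝔰)
end
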